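/- arXiv:2406.07311 — 2 statements merged into one kernel-verified Lean document; each statement's English description precedes it below -/
import Mathlib

section
/- Let n ≥ 3 and let λ be a partition of n. Then both Σ_{π ∈ C_λ} occ₍₂₋₃₋₁₎(π) and Σ_{π ∈ C_λ} occ₍₃₋₁₋₂₎(π) are equal to |C_λ| · ( C(n,3)/6 − (n+1)(3n−4)·X₁/120 − (n+1)·X₂/60 + (n+1)·X₃/30 − X₄/30 ), where occ₍₂₋₃₋₁₎(π) = #{(i,j,k) : 1 ≤ i < j < k ≤ n, π(k) < π(i) < π(j)} and occ₍₃₋₁₋₂₎(π) = #{(i,j,k) : 1 ≤ i < j < k ≤ n, π(j) < π(k) < π(i)} count occurrences of the classical patterns 231 and 312 in π. -/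
open Equiv Finset

/-- The conjugacy class of permutations of `Fin n` with cycle type `lam`
(cycle type includes fixed points as parts of size 1, via `Equiv.Perm.partition`). -/
def conjClass (n : ℕ) (lam : n.Partition) : Finset (Equiv.Perm (Fin n)) :=
  Finset.univ.filter fun π => (Equiv.Perm.partition π).parts = lam.parts


lemma cyc_count {n : ℕ} (π : Perm (Fin n)) (k : ℕ) [hk : Fact k.Prime] :
    (univ.filter fun x => π x ≠ x ∧ (π ^ k) x = x).card = k * π.cycleType.count k := by
  have h1 : (univ.filter fun x => π x ≠ x ∧ (π ^ k) x = x)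
      = (π.cycleFactorsFinset.filter fun c => c.support.card = k).biUnion fun c => c.support := by
    ext x
    simp only [mem_filter, mem_univ, true_and, mem_biUnion]
    constructor
    · rintro ⟨hx, hkx⟩
      refine ⟨π.cycleOf x, ⟨?_, ?_⟩, ?_⟩
      · rw [Perm.cycleOf_mem_cycleFactorsFinset_iff, Perm.mem_support]; exact hx
      · have hc := Perm.isCycle_cycleOf π hx
        rw [← hc.orderOf]
        have hx' : π.cycleOf x x ≠ x := by rwa [Perm.cycleOf_apply_self]
        apply orderOf_eq_prime _ hc.ne_one
        rw [hc.pow_eq_one_iff' hx', Perm.cycleOf_pow_apply_self, hkx]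
      · rw [Perm.mem_support, Perm.cycleOf_apply_self]; exact hx
    · rintro ⟨c, ⟨hc, hck⟩, hx⟩
      have e := Perm.cycle_is_cycleOf hx hc
      have hcy := (Perm.mem_cycleFactorsFinset_iff.1 hc)
      have hx2 : π x ≠ x := by
        rw [← hcy.2 x hx]; exact Perm.mem_support.1 hx
      refine ⟨hx2, ?_⟩
      rw [← Perm.cycleOf_pow_apply_self, ← e, ← hck, ← hcy.1.orderOf, pow_orderOf_eq_one]
      rfl
  rw [h1, card_biUnion]
  · rw [sum_congr rfl (g := fun _ => k) (fun c hc => (mem_filter.1 hc).2)]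
    rw [sum_const, smul_eq_mul, mul_comm, Perm.cycleType_def, Multiset.count_map]
    congr 1
    rw [Finset.card_def, Finset.filter_val]
    simp only [Function.comp, eq_comm]
  · intro c hc d hd hcd
    exact (Perm.cycleFactorsFinset_pairwise_disjoint π (mem_filter.1 hc).1
      (mem_filter.1 hd).1 hcd).disjoint_support

/-- 231 pattern on six slots -/
abbrev pat {α β : Type*} [LT β] (f : α → β) (s : Fin 6 → α) : Prop :=
  f (s 0) < f (s 1) ∧ f (s 1) < f (s 2) ∧ f (s 5) < f (s 3) ∧ f (s 3) < f (s 4)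

lemma exists_std {m n : ℕ} (f : Fin m → Fin n) (hf : Function.Injective f) :
    ∃ τ : Perm (Fin m), ∀ a b, f a < f b ↔ τ a < τ b := by
  have hc : (univ.image f).card = m := by
    rw [card_image_of_injective _ hf]; simp
  let e := (univ.image f).orderIsoOfFin hc
  let g : Fin m → Fin m := fun a => e.symm ⟨f a, by simp⟩
  have hg : Function.Injective g := by
    intro a b h
    have := e.symm.injective h
    exact hf (by simpa using this)
  refine ⟨Equiv.ofBijective g (Finite.injective_iff_bijective.1 hg), fun a b => ?_⟩
  simp [g]

lemma order_avg {m n : ℕ} (u : Fin m ↪ Fin n) (s : Fin 6 → Fin m) :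
    (m.factorial : ℚ) * ∑ σ : Perm (Fin n), (if pat (fun a => σ (u a)) s then (1:ℚ) else 0)
      = n.factorial * ((univ.filter fun τ : Perm (Fin m) => pat τ s).card : ℚ) := by
  have h1 : ∀ ρ : Perm (Fin m),
      ∑ σ : Perm (Fin n), (if pat (fun a => σ (u a)) s then (1:ℚ) else 0)
      = ∑ σ : Perm (Fin n), (if pat (fun a => σ (u (ρ a))) s then (1:ℚ) else 0) := by
    intro ρ
    rw [← Equiv.sum_comp (Equiv.mulRight (ρ.viaFintypeEmbedding u))]
    simp only [Equiv.coe_mulRight, Perm.mul_apply, Perm.viaFintypeEmbedding_apply_image]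
  have h2 : (m.factorial : ℚ) * ∑ σ : Perm (Fin n), (if pat (fun a => σ (u a)) s then (1:ℚ) else 0)
     = ∑ ρ : Perm (Fin m), ∑ σ : Perm (Fin n),
        (if pat (fun a => σ (u (ρ a))) s then (1:ℚ) else 0) := by
    rw [← sum_congr rfl (fun ρ _ => h1 ρ), sum_const, card_univ, Fintype.card_perm,
      Fintype.card_fin, nsmul_eq_mul]
  rw [h2, sum_comm]
  have h3 : ∀ σ : Perm (Fin n), ∑ ρ : Perm (Fin m),
        (if pat (fun a => σ (u (ρ a))) s then (1:ℚ) else 0)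
        = ((univ.filter fun τ : Perm (Fin m) => pat τ s).card : ℚ) := by
    intro σ
    obtain ⟨τ, hτ⟩ := exists_std (fun a => σ (u a)) (σ.injective.comp u.injective)
    simp only [pat, hτ]
    rw [Finset.card_filter]
    push_cast
    exact Equiv.sum_comp (Equiv.mulLeft τ) (fun τ : Perm (Fin m) => if pat τ s then (1:ℚ) else 0)
  rw [sum_congr rfl (fun σ _ => h3 σ), sum_const, card_univ, Fintype.card_perm,
      Fintype.card_fin, nsmul_eq_mul]

/-- probability -/
def P6 {n : ℕ} (i j k a b c : Fin n) : ℚ :=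
  ∑ σ : Perm (Fin n), (if σ i < σ j ∧ σ j < σ k ∧ σ c < σ a ∧ σ a < σ b then (1:ℚ) else 0)

lemma P6_eq {m n : ℕ} {i j k a b c : Fin n} (u : Fin m → Fin n) (hu : Function.Injective u)
    (s : Fin 6 → Fin m) (N : ℕ) (hN : (univ.filter fun τ : Perm (Fin m) => pat τ s).card = N)
    (hs : i = u (s 0) ∧ j = u (s 1) ∧ k = u (s 2) ∧ a = u (s 3) ∧ b = u (s 4) ∧ c = u (s 5))
    (w : ℚ) (hw : w = N / m.factorial) :
    P6 i j k a b c = n.factorial * w := by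
  obtain ⟨rfl, rfl, rfl, rfl, rfl, rfl⟩ := hs
  have h := order_avg ⟨u, hu⟩ s
  rw [hN] at h
  have hm : (m.factorial : ℚ) ≠ 0 := by exact_mod_cast m.factorial_ne_zero
  rw [hw, mul_div_assoc', eq_div_iff hm, ← h, P6, mul_comm]
  rfl


/-- equality indicator -/
def ee {n : ℕ} (x y : Fin n) : ℚ := if x = y then 1 else 0

/-- weight polynomial -/
def WW {n : ℕ} (i j k a b c : Fin n) : ℚ :=
    (1/36) * (1) +
    (1/45) * (ee c i) +
    (-1/360) * (ee c j) +
    (-7/360) * (ee c k) +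
    (-7/360) * (ee b i) +
    (-1/180) * (ee b i * ee c j) +
    (1/90) * (ee b i * ee c k) +
    (-1/360) * (ee b j) +
    (-1/180) * (ee b j * ee c i) +
    (-1/180) * (ee b j * ee c k) +
    (1/45) * (ee b k) +
    (1/90) * (ee b k * ee c i) +
    (-1/180) * (ee b k * ee c j) +
    (-1/360) * (ee a i) +
    (-1/45) * (ee a i * ee c j) +
    (-1/180) * (ee a i * ee c k) +
    (7/360) * (ee a i * ee b j) +
    (-1/90) * (ee a i * ee b j * ee c k) +
    (-1/180) * (ee a i * ee b k) +
    (-1/90) * (ee a i * ee b k * ee c j) +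
    (1/180) * (ee a j) +
    (1/36) * (ee a j * ee c i) +
    (-1/72) * (ee a j * ee c k) +
    (-1/72) * (ee a j * ee b i) +
    (1/45) * (ee a j * ee b i * ee c k) +
    (1/36) * (ee a j * ee b k) +
    (1/45) * (ee a j * ee b k * ee c i) +
    (-1/360) * (ee a k) +
    (-1/180) * (ee a k * ee c i) +
    (7/360) * (ee a k * ee c j) +
    (-1/180) * (ee a k * ee b i) +
    (-1/90) * (ee a k * ee b i * ee c j) +
    (-1/45) * (ee a k * ee b j) +
    (-1/90) * (ee a k * ee b j * ee c i)

set_option maxHeartbeats 4000000 in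
lemma P6_W {n : ℕ} (i j k a b c : Fin n) (hij : i ≠ j) (hik : i ≠ k) (hjk : j ≠ k)
    (hab : a ≠ b) (hac : a ≠ c) (hbc : b ≠ c) :
    P6 i j k a b c = n.factorial * WW i j k a b c := by
  have hji := hij.symm
  have hki := hik.symm
  have hkj := hjk.symm
  by_cases h00 : a = i
  · by_cases h10 : b = i
    · by_cases h20 : c = i
      · simp_all
      by_cases h21 : c = j
      · simp_all
      by_cases h22 : c = k
      · simp_all
      simp_all
    by_cases h11 : b = j
    · by_cases h20 : c = i
      · simp_all
      by_cases h21 : c = j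
      · simp_all
      by_cases h22 : c = k
      · exact P6_eq ![i, j, k] (List.nodup_ofFn.1 (by simp [*])) ![0,1,2,0,1,2] 0
          (by decide +kernel) (by simp [*]) _ (by simp [WW, ee, *]; try norm_num [Nat.factorial])
      exact P6_eq ![c, i, j, k] (List.nodup_ofFn.1 (by simp [*])) ![1,2,3,1,2,0] 1
        (by decide +kernel) (by simp [*]) _ (by simp [WW, ee, *]; try norm_num [Nat.factorial])
    by_cases h12 : b = k
    · by_cases h20 : c = i
      · simp_all
      by_cases h21 : c = j
      · exact P6_eq ![i, j, k] (List.nodup_ofFn.1 (by simp [*])) ![0,1,2,0,2,1] 0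
          (by decide +kernel) (by simp [*]) _ (by simp [WW, ee, *]; try norm_num [Nat.factorial])
      by_cases h22 : c = k
      · simp_all
      exact P6_eq ![c, i, j, k] (List.nodup_ofFn.1 (by simp [*])) ![1,2,3,1,3,0] 1
        (by decide +kernel) (by simp [*]) _ (by simp [WW, ee, *]; try norm_num [Nat.factorial])
    by_cases h20 : c = i
    · simp_all
    by_cases h21 : c = j
    · exact P6_eq ![b, i, j, k] (List.nodup_ofFn.1 (by simp [*])) ![1,2,3,1,0,2] 0
        (by decide +kernel) (by simp [*]) _ (by simp [WW, ee, *]; try norm_num [Nat.factorial])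
    by_cases h22 : c = k
    · exact P6_eq ![b, i, j, k] (List.nodup_ofFn.1 (by simp [*])) ![1,2,3,1,0,3] 0
        (by decide +kernel) (by simp [*]) _ (by simp [WW, ee, *]; try norm_num [Nat.factorial])
    exact P6_eq ![b, c, i, j, k] (List.nodup_ofFn.1 (by simp [*])) ![2,3,4,2,0,1] 3
      (by decide +kernel) (by simp [*]) _ (by simp [WW, ee, *]; try norm_num [Nat.factorial])
  by_cases h01 : a = j
  · by_cases h10 : b = i
    · by_cases h20 : c = i
      · simp_all
      by_cases h21 : c = j
      · simp_all
      by_cases h22 : c = k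
      · exact P6_eq ![i, j, k] (List.nodup_ofFn.1 (by simp [*])) ![0,1,2,1,0,2] 0
          (by decide +kernel) (by simp [*]) _ (by simp [WW, ee, *]; try norm_num [Nat.factorial])
      exact P6_eq ![c, i, j, k] (List.nodup_ofFn.1 (by simp [*])) ![1,2,3,2,1,0] 0
        (by decide +kernel) (by simp [*]) _ (by simp [WW, ee, *]; try norm_num [Nat.factorial])
    by_cases h11 : b = j
    · by_cases h20 : c = i
      · simp_all
      by_cases h21 : c = j
      · simp_all
      by_cases h22 : c = k
      · simp_all
      simp_all
    by_cases h12 : b = k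
    · by_cases h20 : c = i
      · exact P6_eq ![i, j, k] (List.nodup_ofFn.1 (by simp [*])) ![0,1,2,1,2,0] 1
          (by decide +kernel) (by simp [*]) _ (by simp [WW, ee, *]; try norm_num [Nat.factorial])
      by_cases h21 : c = j
      · simp_all
      by_cases h22 : c = k
      · simp_all
      exact P6_eq ![c, i, j, k] (List.nodup_ofFn.1 (by simp [*])) ![1,2,3,2,3,0] 2
        (by decide +kernel) (by simp [*]) _ (by simp [WW, ee, *]; try norm_num [Nat.factorial])
    by_cases h20 : c = i
    · exact P6_eq ![b, i, j, k] (List.nodup_ofFn.1 (by simp [*])) ![1,2,3,2,0,1] 2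
        (by decide +kernel) (by simp [*]) _ (by simp [WW, ee, *]; try norm_num [Nat.factorial])
    by_cases h21 : c = j
    · simp_all
    by_cases h22 : c = k
    · exact P6_eq ![b, i, j, k] (List.nodup_ofFn.1 (by simp [*])) ![1,2,3,2,0,3] 0
        (by decide +kernel) (by simp [*]) _ (by simp [WW, ee, *]; try norm_num [Nat.factorial])
    exact P6_eq ![b, c, i, j, k] (List.nodup_ofFn.1 (by simp [*])) ![2,3,4,3,0,1] 4
      (by decide +kernel) (by simp [*]) _ (by simp [WW, ee, *]; try norm_num [Nat.factorial])
  by_cases h02 : a = k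
  · by_cases h10 : b = i
    · by_cases h20 : c = i
      · simp_all
      by_cases h21 : c = j
      · exact P6_eq ![i, j, k] (List.nodup_ofFn.1 (by simp [*])) ![0,1,2,2,0,1] 0
          (by decide +kernel) (by simp [*]) _ (by simp [WW, ee, *]; try norm_num [Nat.factorial])
      by_cases h22 : c = k
      · simp_all
      exact P6_eq ![c, i, j, k] (List.nodup_ofFn.1 (by simp [*])) ![1,2,3,3,1,0] 0
        (by decide +kernel) (by simp [*]) _ (by simp [WW, ee, *]; try norm_num [Nat.factorial])
    by_cases h11 : b = j
    · by_cases h20 : c = i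
      · exact P6_eq ![i, j, k] (List.nodup_ofFn.1 (by simp [*])) ![0,1,2,2,1,0] 0
          (by decide +kernel) (by simp [*]) _ (by simp [WW, ee, *]; try norm_num [Nat.factorial])
      by_cases h21 : c = j
      · simp_all
      by_cases h22 : c = k
      · simp_all
      exact P6_eq ![c, i, j, k] (List.nodup_ofFn.1 (by simp [*])) ![1,2,3,3,2,0] 0
        (by decide +kernel) (by simp [*]) _ (by simp [WW, ee, *]; try norm_num [Nat.factorial])
    by_cases h12 : b = k
    · by_cases h20 : c = i
      · simp_all
      by_cases h21 : c = j
      · simp_all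
      by_cases h22 : c = k
      · simp_all
      simp_all
    by_cases h20 : c = i
    · exact P6_eq ![b, i, j, k] (List.nodup_ofFn.1 (by simp [*])) ![1,2,3,3,0,1] 1
        (by decide +kernel) (by simp [*]) _ (by simp [WW, ee, *]; try norm_num [Nat.factorial])
    by_cases h21 : c = j
    · exact P6_eq ![b, i, j, k] (List.nodup_ofFn.1 (by simp [*])) ![1,2,3,3,0,2] 1
        (by decide +kernel) (by simp [*]) _ (by simp [WW, ee, *]; try norm_num [Nat.factorial])
    by_cases h22 : c = k
    · simp_all
    exact P6_eq ![b, c, i, j, k] (List.nodup_ofFn.1 (by simp [*])) ![2,3,4,4,0,1] 3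
      (by decide +kernel) (by simp [*]) _ (by simp [WW, ee, *]; try norm_num [Nat.factorial])
  by_cases h10 : b = i
  · by_cases h20 : c = i
    · simp_all
    by_cases h21 : c = j
    · exact P6_eq ![a, i, j, k] (List.nodup_ofFn.1 (by simp [*])) ![1,2,3,0,1,2] 0
        (by decide +kernel) (by simp [*]) _ (by simp [WW, ee, *]; try norm_num [Nat.factorial])
    by_cases h22 : c = k
    · exact P6_eq ![a, i, j, k] (List.nodup_ofFn.1 (by simp [*])) ![1,2,3,0,1,3] 0
        (by decide +kernel) (by simp [*]) _ (by simp [WW, ee, *]; try norm_num [Nat.factorial])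
    exact P6_eq ![a, c, i, j, k] (List.nodup_ofFn.1 (by simp [*])) ![2,3,4,0,2,1] 1
      (by decide +kernel) (by simp [*]) _ (by simp [WW, ee, *]; try norm_num [Nat.factorial])
  by_cases h11 : b = j
  · by_cases h20 : c = i
    · exact P6_eq ![a, i, j, k] (List.nodup_ofFn.1 (by simp [*])) ![1,2,3,0,2,1] 1
        (by decide +kernel) (by simp [*]) _ (by simp [WW, ee, *]; try norm_num [Nat.factorial])
    by_cases h21 : c = j
    · simp_all
    by_cases h22 : c = k
    · exact P6_eq ![a, i, j, k] (List.nodup_ofFn.1 (by simp [*])) ![1,2,3,0,2,3] 0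
        (by decide +kernel) (by simp [*]) _ (by simp [WW, ee, *]; try norm_num [Nat.factorial])
    exact P6_eq ![a, c, i, j, k] (List.nodup_ofFn.1 (by simp [*])) ![2,3,4,0,3,1] 3
      (by decide +kernel) (by simp [*]) _ (by simp [WW, ee, *]; try norm_num [Nat.factorial])
  by_cases h12 : b = k
  · by_cases h20 : c = i
    · exact P6_eq ![a, i, j, k] (List.nodup_ofFn.1 (by simp [*])) ![1,2,3,0,3,1] 2
        (by decide +kernel) (by simp [*]) _ (by simp [WW, ee, *]; try norm_num [Nat.factorial])
    by_cases h21 : c = j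
    · exact P6_eq ![a, i, j, k] (List.nodup_ofFn.1 (by simp [*])) ![1,2,3,0,3,2] 1
        (by decide +kernel) (by simp [*]) _ (by simp [WW, ee, *]; try norm_num [Nat.factorial])
    by_cases h22 : c = k
    · simp_all
    exact P6_eq ![a, c, i, j, k] (List.nodup_ofFn.1 (by simp [*])) ![2,3,4,0,4,1] 6
      (by decide +kernel) (by simp [*]) _ (by simp [WW, ee, *]; try norm_num [Nat.factorial])
  by_cases h20 : c = i
  · exact P6_eq ![a, b, i, j, k] (List.nodup_ofFn.1 (by simp [*])) ![2,3,4,0,1,2] 6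
      (by decide +kernel) (by simp [*]) _ (by simp [WW, ee, *]; try norm_num [Nat.factorial])
  by_cases h21 : c = j
  · exact P6_eq ![a, b, i, j, k] (List.nodup_ofFn.1 (by simp [*])) ![2,3,4,0,1,3] 3
      (by decide +kernel) (by simp [*]) _ (by simp [WW, ee, *]; try norm_num [Nat.factorial])
  by_cases h22 : c = k
  · exact P6_eq ![a, b, i, j, k] (List.nodup_ofFn.1 (by simp [*])) ![2,3,4,0,1,4] 1
      (by decide +kernel) (by simp [*]) _ (by simp [WW, ee, *]; try norm_num [Nat.factorial])
  exact P6_eq ![a, b, c, i, j, k] (List.nodup_ofFn.1 (by simp [*])) ![3,4,5,0,1,2] 20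
    (by decide +kernel) (by simp [*]) _ (by simp [WW, ee, *]; try norm_num [Nat.factorial])

/-- sum over triples of distinct points -/
def AA {n : ℕ} (G : Fin n → Fin n → Fin n → ℚ) : ℚ :=
  ∑ i, ∑ j, ∑ k, if i ≠ j ∧ i ≠ k ∧ j ≠ k then G i j k else 0

lemma AA_add {n : ℕ} (F G : Fin n → Fin n → Fin n → ℚ) :
    AA (fun i j k => F i j k + G i j k) = AA F + AA G := by
  simp only [AA, ← sum_add_distrib]
  refine sum_congr rfl fun i _ => sum_congr rfl fun j _ => sum_congr rfl fun k _ => ?_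
  split_ifs <;> simp

lemma AA_mul {n : ℕ} (c : ℚ) (G : Fin n → Fin n → Fin n → ℚ) :
    AA (fun i j k => c * G i j k) = c * AA G := by
  simp only [AA, mul_sum]
  refine sum_congr rfl fun i _ => sum_congr rfl fun j _ => sum_congr rfl fun k _ => ?_
  split_ifs <;> simp

lemma AA_ie {n : ℕ} (G : Fin n → Fin n → Fin n → ℚ) :
    AA G = (∑ i, ∑ j, ∑ k, G i j k) - (∑ i, ∑ j, G i j i) - (∑ i, ∑ j, G i j j)
      - (∑ i, ∑ j, G i i j) + 2 * ∑ i, G i i i := by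
  have h : ∀ i j k : Fin n, (if i ≠ j ∧ i ≠ k ∧ j ≠ k then G i j k else 0)
      = G i j k - (if k = i then G i j k else 0) - (if k = j then G i j k else 0)
        - (if j = i then G i j k else 0) + 2 * (if j = i then (if k = i then G i j k else 0) else 0) := by
    intro i j k
    by_cases h1 : j = i
    · subst h1
      by_cases h2 : k = j
      · subst h2; simp; ring
      · simp [h2]
    · have h1' : i ≠ j := fun h => h1 h.symm
      by_cases h2 : k = i
      · subst h2; simp [h1, h1']
      · have h2' : i ≠ k := fun h => h2 h.symm
        by_cases h3 : k = j
        · subst h3; simp [h2]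
        · have h3' : j ≠ k := fun h => h3 h.symm
          simp [h1, h2, h3, h1', h2', h3']
  have e : ∀ i j : Fin n, (∑ k, if j = i then G i j k else 0) = if j = i then ∑ k, G i j k else 0 := by
    intro i j; split_ifs <;> simp
  have e' : ∀ i j : Fin n, (∑ k, if j = i then (if k = i then G i j k else 0) else 0)
      = if j = i then G i j i else 0 := by
    intro i j; split_ifs <;> simp
  simp only [AA, h, sum_add_distrib, sum_sub_distrib, ← mul_sum, e, e', sum_ite_eq', mem_univ, if_true]

lemma AA_012 {n : ℕ} {G H : Fin n → Fin n → Fin n → ℚ} (h : ∀ i j k, G i j k = H i j k) :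
    AA G = AA H := by
  simp only [AA, h]

lemma AA_102 {n : ℕ} {G H : Fin n → Fin n → Fin n → ℚ} (h : ∀ i j k, G i j k = H j i k) :
    AA G = AA H := by
  simp only [AA, h]
  rw [sum_comm]
  refine sum_congr rfl fun i _ => sum_congr rfl fun j _ => sum_congr rfl fun k _ => ?_
  congr 1
  simp only [ne_eq, eq_comm, eq_iff_iff]
  tauto

lemma AA_021 {n : ℕ} {G H : Fin n → Fin n → Fin n → ℚ} (h : ∀ i j k, G i j k = H i k j) :
    AA G = AA H := by
  simp only [AA, h]
  refine sum_congr rfl fun i _ => ?_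
  rw [sum_comm]
  refine sum_congr rfl fun j _ => sum_congr rfl fun k _ => ?_
  congr 1
  simp only [ne_eq, eq_comm, eq_iff_iff]
  tauto

lemma AA_120 {n : ℕ} {G H : Fin n → Fin n → Fin n → ℚ} (h : ∀ i j k, G i j k = H j k i) :
    AA G = AA H :=
  (AA_102 (H := fun i j k => H i k j) (fun i j k => h i j k)).trans (AA_021 fun _ _ _ => rfl)

lemma AA_201 {n : ℕ} {G H : Fin n → Fin n → Fin n → ℚ} (h : ∀ i j k, G i j k = H k i j) :
    AA G = AA H :=
  (AA_021 (H := fun i j k => H j i k) (fun i j k => h i j k)).trans (AA_102 fun _ _ _ => rfl)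

lemma AA_210 {n : ℕ} {G H : Fin n → Fin n → Fin n → ℚ} (h : ∀ i j k, G i j k = H k j i) :
    AA G = AA H :=
  (AA_102 (H := fun i j k => H k i j) (fun i j k => h i j k)).trans (AA_201 fun _ _ _ => rfl)

lemma ee_sum {n : ℕ} (x : Fin n) (F : Fin n → ℚ) : ∑ j, ee x j * F j = F x := by
  simp [ee]

lemma ee_sum1 {n : ℕ} (x : Fin n) : ∑ j, ee x j = 1 := by
  simp [ee]

lemma ee_sq {n : ℕ} (x y : Fin n) : ee x y * ee x y = ee x y := by
  simp [ee]

lemma ee_two {n : ℕ} (π : Perm (Fin n)) (x : Fin n) :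
    ee (π x) x * ee (π (π x)) x = ee (π x) x := by
  simp only [ee]
  split_ifs <;> simp_all

lemma ee_pi {n : ℕ} (π : Perm (Fin n)) (x y : Fin n) : ee (π x) (π y) = ee x y := by
  simp [ee]

lemma ee_sq' {n : ℕ} (x y : Fin n) (z : ℚ) : ee x y * (ee x y * z) = ee x y * z := by
  rw [← mul_assoc, ee_sq]

lemma ee_two' {n : ℕ} (π : Perm (Fin n)) (x : Fin n) :
    ee (π (π x)) x * ee (π x) x = ee (π x) x := by
  rw [mul_comm, ee_two]

lemma ee_sum2 {n : ℕ} (π : Perm (Fin n)) (x : Fin n) : ∑ i, ee (π i) x = 1 := by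
  rw [Equiv.sum_comp π (fun i => ee i x)]
  simp [ee]

lemma ee_sum3 {n : ℕ} (x : Fin n) (F : Fin n → ℚ) : ∑ j, F j * ee x j = F x := by
  simp [ee]

lemma ee_sq3 {n : ℕ} (x y : Fin n) (z : ℚ) : ee x y * (z * ee x y) = z * ee x y := by
  rw [mul_left_comm, ee_sq]

set_option linter.unusedSimpArgs false in
lemma AA_W {n : ℕ} (π : Perm (Fin n)) (p q r : ℚ)
    (h1 : ∑ i, ee (π i) i = p) (h2 : ∑ i, ee (π (π i)) i = p + 2 * q)
    (h3 : ∑ i, ee (π (π (π i))) i = p + 3 * r) :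
    AA (fun i j k => WW i j k (π i) (π j) (π k)) =
      n * (n - 1) * (n - 2) / 36 - (n + 1) * (3 * n - 4) * (p - 1) / 120
      - (n + 1) * ((p - 1) * (p - 2) / 2 + q - 1) / 60
      + (n + 1) * ((p - 1) * (p - 2) / 2 - q) / 30
      - ((p - 1) * (p - 2) * (p - 3) / 3 - p - r + 2) / 30 := by
  have B0 : AA (fun i j k : Fin n => 1) = n * (n - 1) * (n - 2) := by
    rw [AA_ie]
    simp only [sum_const, card_univ, Fintype.card_fin, nsmul_eq_mul, mul_one, mul_assoc, ← mul_sum, ← sum_mul, ee_sum, ee_sum1, ee_sq, ee_sq', ee_pi, ee_sum2, ee_sum3, ee_sq3, ee_two, ee_two', h1, h2, h3]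
    ring
  have B1 : AA (fun i j k : Fin n => ee (π i) i) = p * (n - 1) * (n - 2) := by
    rw [AA_ie]
    simp only [sum_const, card_univ, Fintype.card_fin, nsmul_eq_mul, mul_one, mul_assoc, ← mul_sum, ← sum_mul, ee_sum, ee_sum1, ee_sq, ee_sq', ee_pi, ee_sum2, ee_sum3, ee_sq3, ee_two, ee_two', h1, h2, h3]
    ring
  have B2 : AA (fun i j k : Fin n => ee (π i) j) = (n - p) * (n - 2) := by
    rw [AA_ie]
    simp only [sum_const, card_univ, Fintype.card_fin, nsmul_eq_mul, mul_one, mul_assoc, ← mul_sum, ← sum_mul, ee_sum, ee_sum1, ee_sq, ee_sq', ee_pi, ee_sum2, ee_sum3, ee_sq3, ee_two, ee_two', h1, h2, h3]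
    ring
  have B3 : AA (fun i j k : Fin n => ee (π i) i * ee (π j) j) = p * (p - 1) * (n - 2) := by
    rw [AA_ie]
    simp only [sum_const, card_univ, Fintype.card_fin, nsmul_eq_mul, mul_one, mul_assoc, ← mul_sum, ← sum_mul, ee_sum, ee_sum1, ee_sq, ee_sq', ee_pi, ee_sum2, ee_sum3, ee_sq3, ee_two, ee_two', h1, h2, h3]
    ring
  have B4 : AA (fun i j k : Fin n => ee (π i) i * ee (π j) k) = p * (n - p) := by
    rw [AA_ie]
    simp only [sum_const, card_univ, Fintype.card_fin, nsmul_eq_mul, mul_one, mul_assoc, ← mul_sum, ← sum_mul, ee_sum, ee_sum1, ee_sq, ee_sq', ee_pi, ee_sum2, ee_sum3, ee_sq3, ee_two, ee_two', h1, h2, h3]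
    ring
  have B5 : AA (fun i j k : Fin n => ee (π i) j * ee (π j) i) = 2 * q * (n - 2) := by
    rw [AA_ie]
    simp only [sum_const, card_univ, Fintype.card_fin, nsmul_eq_mul, mul_one, mul_assoc, ← mul_sum, ← sum_mul, ee_sum, ee_sum1, ee_sq, ee_sq', ee_pi, ee_sum2, ee_sum3, ee_sq3, ee_two, ee_two', h1, h2, h3]
    ring
  have B6 : AA (fun i j k : Fin n => ee (π i) j * ee (π j) k) = n - p - 2 * q := by
    rw [AA_ie]
    simp only [sum_const, card_univ, Fintype.card_fin, nsmul_eq_mul, mul_one, mul_assoc, ← mul_sum, ← sum_mul, ee_sum, ee_sum1, ee_sq, ee_sq', ee_pi, ee_sum2, ee_sum3, ee_sq3, ee_two, ee_two', h1, h2, h3]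
    ring
  have B7 : AA (fun i j k : Fin n => ee (π i) i * ee (π j) j * ee (π k) k) = p * (p - 1) * (p - 2) := by
    rw [AA_ie]
    simp only [sum_const, card_univ, Fintype.card_fin, nsmul_eq_mul, mul_one, mul_assoc, ← mul_sum, ← sum_mul, ee_sum, ee_sum1, ee_sq, ee_sq', ee_pi, ee_sum2, ee_sum3, ee_sq3, ee_two, ee_two', h1, h2, h3]
    ring
  have B8 : AA (fun i j k : Fin n => ee (π i) i * ee (π j) k * ee (π k) j) = p * (2 * q) := by
    rw [AA_ie]
    simp only [sum_const, card_univ, Fintype.card_fin, nsmul_eq_mul, mul_one, mul_assoc, ← mul_sum, ← sum_mul, ee_sum, ee_sum1, ee_sq, ee_sq', ee_pi, ee_sum2, ee_sum3, ee_sq3, ee_two, ee_two', h1, h2, h3]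
    ring
  have B9 : AA (fun i j k : Fin n => ee (π i) j * ee (π j) k * ee (π k) i) = 3 * r := by
    rw [AA_ie]
    simp only [sum_const, card_univ, Fintype.card_fin, nsmul_eq_mul, mul_one, mul_assoc, ← mul_sum, ← sum_mul, ee_sum, ee_sum1, ee_sq, ee_sq', ee_pi, ee_sum2, ee_sum3, ee_sq3, ee_two, ee_two', h1, h2, h3]
    ring
  have g0 : AA (fun i j k : Fin n => 1) = _ :=
    (AA_012 fun i j k => by ring).trans B0
  have g1 : AA (fun i j k : Fin n => ee (π k) i) = _ :=
    (AA_201 fun i j k => by ring).trans B2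
  have g2 : AA (fun i j k : Fin n => ee (π k) j) = _ :=
    (AA_210 fun i j k => by ring).trans B2
  have g3 : AA (fun i j k : Fin n => ee (π k) k) = _ :=
    (AA_201 fun i j k => by ring).trans B1
  have g4 : AA (fun i j k : Fin n => ee (π j) i) = _ :=
    (AA_102 fun i j k => by ring).trans B2
  have g5 : AA (fun i j k : Fin n => ee (π j) i * ee (π k) j) = _ :=
    (AA_210 fun i j k => by ring).trans B6
  have g6 : AA (fun i j k : Fin n => ee (π j) i * ee (π k) k) = _ :=
    (AA_210 fun i j k => by ring).trans B4
  have g7 : AA (fun i j k : Fin n => ee (π j) j) = _ :=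
    (AA_102 fun i j k => by ring).trans B1
  have g8 : AA (fun i j k : Fin n => ee (π j) j * ee (π k) i) = _ :=
    (AA_120 fun i j k => by ring).trans B4
  have g9 : AA (fun i j k : Fin n => ee (π j) j * ee (π k) k) = _ :=
    (AA_120 fun i j k => by ring).trans B3
  have g10 : AA (fun i j k : Fin n => ee (π j) k) = _ :=
    (AA_120 fun i j k => by ring).trans B2
  have g11 : AA (fun i j k : Fin n => ee (π j) k * ee (π k) i) = _ :=
    (AA_120 fun i j k => by ring).trans B6
  have g12 : AA (fun i j k : Fin n => ee (π j) k * ee (π k) j) = _ :=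
    (AA_120 fun i j k => by ring).trans B5
  have g13 : AA (fun i j k : Fin n => ee (π i) i) = _ :=
    (AA_012 fun i j k => by ring).trans B1
  have g14 : AA (fun i j k : Fin n => ee (π i) i * ee (π k) j) = _ :=
    (AA_021 fun i j k => by ring).trans B4
  have g15 : AA (fun i j k : Fin n => ee (π i) i * ee (π k) k) = _ :=
    (AA_021 fun i j k => by ring).trans B3
  have g16 : AA (fun i j k : Fin n => ee (π i) i * ee (π j) j) = _ :=
    (AA_012 fun i j k => by ring).trans B3
  have g17 : AA (fun i j k : Fin n => ee (π i) i * ee (π j) j * ee (π k) k) = _ :=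
    (AA_012 fun i j k => by ring).trans B7
  have g18 : AA (fun i j k : Fin n => ee (π i) i * ee (π j) k) = _ :=
    (AA_012 fun i j k => by ring).trans B4
  have g19 : AA (fun i j k : Fin n => ee (π i) i * ee (π j) k * ee (π k) j) = _ :=
    (AA_012 fun i j k => by ring).trans B8
  have g20 : AA (fun i j k : Fin n => ee (π i) j) = _ :=
    (AA_012 fun i j k => by ring).trans B2
  have g21 : AA (fun i j k : Fin n => ee (π i) j * ee (π k) i) = _ :=
    (AA_201 fun i j k => by ring).trans B6
  have g22 : AA (fun i j k : Fin n => ee (π i) j * ee (π k) k) = _ :=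
    (AA_201 fun i j k => by ring).trans B4
  have g23 : AA (fun i j k : Fin n => ee (π i) j * ee (π j) i) = _ :=
    (AA_012 fun i j k => by ring).trans B5
  have g24 : AA (fun i j k : Fin n => ee (π i) j * ee (π j) i * ee (π k) k) = _ :=
    (AA_201 fun i j k => by ring).trans B8
  have g25 : AA (fun i j k : Fin n => ee (π i) j * ee (π j) k) = _ :=
    (AA_012 fun i j k => by ring).trans B6
  have g26 : AA (fun i j k : Fin n => ee (π i) j * ee (π j) k * ee (π k) i) = _ :=
    (AA_012 fun i j k => by ring).trans B9
  have g27 : AA (fun i j k : Fin n => ee (π i) k) = _ :=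
    (AA_021 fun i j k => by ring).trans B2
  have g28 : AA (fun i j k : Fin n => ee (π i) k * ee (π k) i) = _ :=
    (AA_021 fun i j k => by ring).trans B5
  have g29 : AA (fun i j k : Fin n => ee (π i) k * ee (π k) j) = _ :=
    (AA_021 fun i j k => by ring).trans B6
  have g30 : AA (fun i j k : Fin n => ee (π i) k * ee (π j) i) = _ :=
    (AA_102 fun i j k => by ring).trans B6
  have g31 : AA (fun i j k : Fin n => ee (π i) k * ee (π j) i * ee (π k) j) = _ :=
    (AA_021 fun i j k => by ring).trans B9
  have g32 : AA (fun i j k : Fin n => ee (π i) k * ee (π j) j) = _ :=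
    (AA_102 fun i j k => by ring).trans B4
  have g33 : AA (fun i j k : Fin n => ee (π i) k * ee (π j) j * ee (π k) i) = _ :=
    (AA_102 fun i j k => by ring).trans B8
  simp only [WW, AA_add, AA_mul, g0, g1, g2, g3, g4, g5, g6, g7, g8, g9, g10, g11, g12, g13, g14, g15, g16, g17, g18, g19, g20, g21, g22, g23, g24, g25, g26, g27, g28, g29, g30, g31, g32, g33]
  ring

lemma cnt1 {n : ℕ} (π : Perm (Fin n)) :
    ∑ i, ee (π i) i = (π.partition.parts.count 1 : ℚ) := by
  have h0 : π.cycleType.count 1 = 0 := by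
    rw [Multiset.count_eq_zero]
    intro h
    exact absurd (Perm.two_le_of_mem_cycleType h) (by norm_num)
  rw [Perm.parts_partition, Multiset.count_add, h0, Multiset.count_replicate_self, zero_add,
    ← Finset.card_compl]
  simp only [ee, sum_boole]
  congr 2
  ext x
  simp

lemma cnt_prime {n : ℕ} (π : Perm (Fin n)) (k : ℕ) [hk : Fact k.Prime] :
    ∑ i, ee ((π ^ k) i) i = (π.partition.parts.count 1 : ℚ) + k * (π.partition.parts.count k : ℚ) := by
  have h1 : π.partition.parts.count k = π.cycleType.count k := by
    rw [Perm.parts_partition, Multiset.count_add, Multiset.count_replicate,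
      if_neg hk.out.one_lt.ne, add_zero]
  have h2 := cyc_count π k
  rw [h1, ← cnt1, ← Nat.cast_mul, ← h2, Finset.card_filter]
  push_cast
  rw [← sum_add_distrib]
  refine sum_congr rfl fun i _ => ?_
  by_cases h : π i = i
  · have h3 := Perm.pow_apply_eq_self_of_apply_eq_self h k
    simp only [ee, h, h3, if_true, Perm.iterate_eq_pow]; simp
  · simp [ee, h]

/-- occurrences of 231 -/
def occ {n : ℕ} (π : Perm (Fin n)) : ℚ :=
  ((Finset.univ : Finset (Fin n × Fin n × Fin n)).filter fun x =>
          x.1 < x.2.1 ∧ x.2.1 < x.2.2 ∧ π x.2.2 < π x.1 ∧ π x.1 < π x.2.1).card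

lemma occ_conj {n : ℕ} (π σ : Perm (Fin n)) :
    occ (σ * π * σ⁻¹) = ∑ i, ∑ j, ∑ k,
      if σ i < σ j ∧ σ j < σ k ∧ σ (π k) < σ (π i) ∧ σ (π i) < σ (π j) then (1:ℚ) else 0 := by
  rw [occ, Finset.card_filter]
  push_cast
  rw [Fintype.sum_prod_type, ← Equiv.sum_comp σ]
  refine sum_congr rfl fun i _ => ?_
  rw [Fintype.sum_prod_type, ← Equiv.sum_comp σ]
  refine sum_congr rfl fun j _ => ?_
  rw [← Equiv.sum_comp σ]
  simp

lemma sum_occ_conj {n : ℕ} (π : Perm (Fin n)) :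
    ∑ σ : Perm (Fin n), occ (σ * π * σ⁻¹)
      = n.factorial * AA (fun i j k => WW i j k (π i) (π j) (π k)) := by
  simp only [occ_conj]
  rw [← AA_mul, AA, sum_comm]
  refine sum_congr rfl fun i _ => ?_
  rw [sum_comm]
  refine sum_congr rfl fun j _ => ?_
  rw [sum_comm]
  refine sum_congr rfl fun k _ => ?_
  split_ifs with h
  · rw [← P6_W i j k (π i) (π j) (π k) h.1 h.2.1 h.2.2 (by simpa using h.1) (by simpa using h.2.1)
      (by simpa using h.2.2)]
    rfl
  · refine sum_eq_zero fun σ _ => if_neg ?_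
    rintro ⟨a, b, -, -⟩
    refine h ⟨?_, ?_, ?_⟩
    · rintro rfl; exact lt_irrefl _ a
    · rintro rfl; exact lt_irrefl _ (a.trans b)
    · rintro rfl; exact lt_irrefl _ b

lemma parts_conj {n : ℕ} (π σ : Perm (Fin n)) :
    (σ * π * σ⁻¹).partition.parts = π.partition.parts := by
  have : IsConj π (σ * π * σ⁻¹) := isConj_iff.2 ⟨σ, rfl⟩
  rw [Perm.partition_eq_of_isConj.1 this]

lemma sum_conj {n : ℕ} (lam : n.Partition) (σ : Perm (Fin n)) :
    ∑ π ∈ conjClass n lam, occ (σ * π * σ⁻¹) = ∑ π ∈ conjClass n lam, occ π := by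
  refine Finset.sum_equiv (MulAut.conj σ).toEquiv (fun π => ?_) (fun π _ => ?_)
  · simp [conjClass, parts_conj]
  · simp

lemma main231 (n : ℕ) (lam : n.Partition) (p q r : ℚ)
    (hp : p = (lam.parts.count 1 : ℚ)) (hq : q = (lam.parts.count 2 : ℚ))
    (hr : r = (lam.parts.count 3 : ℚ)) :
    ∑ π ∈ conjClass n lam, occ π = (conjClass n lam).card *
     ( (n:ℚ) * (n - 1) * (n - 2) / 36 - (n + 1) * (3 * n - 4) * (p - 1) / 120
      - (n + 1) * ((p - 1) * (p - 2) / 2 + q - 1) / 60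
      + (n + 1) * ((p - 1) * (p - 2) / 2 - q) / 30
      - ((p - 1) * (p - 2) * (p - 3) / 3 - p - r + 2) / 30) := by
  have hn : (n.factorial : ℚ) ≠ 0 := by exact_mod_cast n.factorial_ne_zero
  apply mul_left_cancel₀ hn
  have h1 : (n.factorial : ℚ) * ∑ π ∈ conjClass n lam, occ π
      = ∑ σ : Perm (Fin n), ∑ π ∈ conjClass n lam, occ (σ * π * σ⁻¹) := by
    rw [sum_congr rfl (fun σ _ => sum_conj lam σ), sum_const, card_univ, Fintype.card_perm,
      Fintype.card_fin, nsmul_eq_mul]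
  rw [h1, sum_comm, mul_left_comm, ← nsmul_eq_mul (conjClass n lam).card, ← sum_const]
  refine sum_congr rfl fun π hπ => ?_
  have hπ' : π.partition.parts = lam.parts := by simpa [conjClass] using hπ
  rw [sum_occ_conj, AA_W π p q r]
  · rw [cnt1, hπ', hp]
  · have := cnt_prime π 2
    rw [hπ', ← hp, ← hq] at this
    exact_mod_cast this
  · have : Fact (Nat.Prime 3) := ⟨by norm_num⟩
    have := cnt_prime π 3
    rw [hπ', ← hp, ← hr] at this
    exact_mod_cast this

lemma parts_inv {n : ℕ} (π : Perm (Fin n)) :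
    (π⁻¹).partition.parts = π.partition.parts := by
  rw [Perm.parts_partition, Perm.parts_partition, Perm.cycleType_inv, Perm.support_inv]

lemma occ_inv {n : ℕ} (π : Perm (Fin n)) :
    occ π⁻¹ = ((Finset.univ : Finset (Fin n × Fin n × Fin n)).filter fun x =>
          x.1 < x.2.1 ∧ x.2.1 < x.2.2 ∧ π x.2.1 < π x.2.2 ∧ π x.2.2 < π x.1).card := by
  rw [occ]
  congr 1
  refine Finset.card_bij' (fun x _ => (π⁻¹ x.2.2, π⁻¹ x.1, π⁻¹ x.2.1))
    (fun x _ => (π x.2.1, π x.2.2, π x.1)) ?_ ?_ ?_ ?_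
  · rintro ⟨i, j, k⟩ h
    simp at h ⊢
    tauto
  · rintro ⟨i, j, k⟩ h
    simp at h ⊢
    tauto
  · rintro ⟨i, j, k⟩ h
    simp
  · rintro ⟨i, j, k⟩ h
    simp

theorem stmt10 (n : ℕ) (hn : 3 ≤ n) (lam : n.Partition)
    (p q r X₁ X₂ X₃ X₄ : ℚ)
    (hp : p = (lam.parts.count 1 : ℚ)) (hq : q = (lam.parts.count 2 : ℚ))
    (hr : r = (lam.parts.count 3 : ℚ))
    (hX1 : X₁ = p - 1) (hX2 : X₂ = (p - 1) * (p - 2) / 2 + q - 1)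
    (hX3 : X₃ = (p - 1) * (p - 2) / 2 - q)
    (hX4 : X₄ = (p - 1) * (p - 2) * (p - 3) / 3 - p - r + 2) :
    ((∑ π ∈ conjClass n lam,
      ((((Finset.univ : Finset (Fin n × Fin n × Fin n)).filter fun x =>
          x.1 < x.2.1 ∧ x.2.1 < x.2.2 ∧ π x.2.2 < π x.1 ∧ π x.1 < π x.2.1).card : ℚ)))
      = ((conjClass n lam).card : ℚ) *
        ((n.choose 3 : ℚ) / 6 - ((n : ℚ) + 1) * (3 * (n : ℚ) - 4) * X₁ / 120
          - ((n : ℚ) + 1) * X₂ / 60 + ((n : ℚ) + 1) * X₃ / 30 - X₄ / 30)) ∧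
    ((∑ π ∈ conjClass n lam,
      ((((Finset.univ : Finset (Fin n × Fin n × Fin n)).filter fun x =>
          x.1 < x.2.1 ∧ x.2.1 < x.2.2 ∧ π x.2.1 < π x.2.2 ∧ π x.2.2 < π x.1).card : ℚ)))
      = ((conjClass n lam).card : ℚ) *
        ((n.choose 3 : ℚ) / 6 - ((n : ℚ) + 1) * (3 * (n : ℚ) - 4) * X₁ / 120
          - ((n : ℚ) + 1) * X₂ / 60 + ((n : ℚ) + 1) * X₃ / 30 - X₄ / 30)) := by
  have hc : (n.choose 3 : ℚ) / 6 = (n:ℚ) * (n - 1) * (n - 2) / 36 := by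
    rw [Nat.cast_choose ℚ hn]
    obtain ⟨m, rfl⟩ := Nat.exists_eq_add_of_le hn
    have hm : (m.factorial : ℚ) ≠ 0 := by exact_mod_cast m.factorial_ne_zero
    have e : (3 + m).factorial = (m + 3) * (m + 2) * (m + 1) * m.factorial := by
      rw [add_comm]; simp [Nat.factorial]; ring
    rw [e, Nat.add_sub_cancel_left]
    simp only [Nat.factorial]
    push_cast
    field_simp
    ring
  have h := main231 n lam p q r hp hq hr
  subst hX1 hX2 hX3 hX4
  rw [hc]
  refine ⟨h, ?_⟩
  rw [← h]
  refine Finset.sum_equiv (Equiv.inv (Perm (Fin n))) (fun π => ?_) (fun π _ => ?_)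
  · simp [conjClass, parts_inv]
  · rw [Equiv.inv_apply, occ_inv]
end

section
/- Let n ≥ 3 and let λ be a partition of n. Then Σ_{π ∈ C_λ} occ₍₁₂₃₎(π) = |C_λ| · ( (n−2)/6 + X₁/n + X₂/(n(n−1)) + X₃/n + X₄/(n(n−1)) ), where occ₍₁₂₃₎(π) = #{i : 1 ≤ i ≤ n−2, π(i) < π(i+1) < π(i+2)} is the number of occurrences of the consecutive (vincular) pattern (123) in π. -/
open Equiv Finset

lemma fib_count {n k : ℕ} (e : Fin k ↪ Fin n) (P : (Fin k ↪ Fin n) → Prop) [DecidablePred P] :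
    (univ.filter fun σ : Perm (Fin n) => P (e.trans σ.toEmbedding)).card * n.descFactorial k
      = n.factorial * (univ.filter P).card := by
  have h1 : ∀ e' : Fin k ↪ Fin n, (univ.filter fun σ : Perm (Fin n) => P (e'.trans σ.toEmbedding)).card
      = (univ.filter fun σ : Perm (Fin n) => P (e.trans σ.toEmbedding)).card := by
    intro e'
    obtain ⟨τ, hτ⟩ := (Equiv.Perm.isMultiplyPretransitive (Fin n) k).exists_smul_eq e e'
    have : e' = e.trans τ.toEmbedding := by rw [← hτ]; ext; simp
    subst this
    refine Finset.card_bij (fun σ _ => σ * τ) ?_ ?_ ?_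
    · intro σ h
      simp only [mem_filter, mem_univ, true_and] at h ⊢
      convert h using 1
      ext; simp
    · intro a _ b _ h
      simpa using h
    · intro b hb
      refine ⟨b * τ⁻¹, ?_, by simp⟩
      simp only [mem_filter, mem_univ, true_and] at hb ⊢
      convert hb using 1
      ext; simp
  have h2 : ∑ e' : Fin k ↪ Fin n, (univ.filter fun σ : Perm (Fin n) => P (e'.trans σ.toEmbedding)).card
      = ∑ σ : Perm (Fin n), (univ.filter P).card := by
    simp only [Finset.card_filter]
    rw [Finset.sum_comm]
    refine Finset.sum_congr rfl fun σ _ => ?_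
    exact Fintype.sum_equiv (Equiv.embeddingCongr (Equiv.refl _) σ) _ _ (fun x => by
      congr 1)
  rw [Finset.sum_congr rfl (fun e' _ => h1 e')] at h2
  simp [Fintype.card_perm, Fintype.card_embedding_eq] at h2
  rw [mul_comm, h2]

def T3 (m : ℕ) : Finset (Σ _ : ℕ, Σ _ : ℕ, ℕ) :=
  (range m).sigma fun k => (range k).sigma fun j => range j

lemma card_T3 (m : ℕ) : (((T3 m).card : ℕ) : ℚ) = m * (m - 1) * (m - 2) / 6 := by
  have h2 : ∀ k : ℕ, ((∑ j ∈ range k, j : ℕ) : ℚ) = k * (k - 1) / 2 := by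
    intro k
    induction k with
    | zero => simp
    | succ k ih => rw [Finset.sum_range_succ]; push_cast at *; rw [ih]; ring
  have : (T3 m).card = ∑ k ∈ range m, ∑ j ∈ range k, j := by
    simp [T3]
  rw [this]
  induction m with
  | zero => simp
  | succ k ih =>
    rw [Finset.sum_range_succ, Nat.cast_add, h2, ih (by simp [T3])]; push_cast; ring

lemma emb5 {n : ℕ} (a b c d e : Fin n) (h : [a,b,c,d,e].Nodup) :
   ∃ f : Fin 5 ↪ Fin n, f 0 = a ∧ f 1 = b ∧ f 2 = c ∧ f 3 = d ∧ f 4 = e := by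
  refine ⟨⟨![a,b,c,d,e], ?_⟩, rfl, rfl, rfl, rfl, rfl⟩
  intro i j hij
  fin_cases i <;> fin_cases j <;> simp_all

lemma emb4 {n : ℕ} (a b c d : Fin n) (h : [a,b,c,d].Nodup) :
   ∃ f : Fin 4 ↪ Fin n, f 0 = a ∧ f 1 = b ∧ f 2 = c ∧ f 3 = d := by
  refine ⟨⟨![a,b,c,d], ?_⟩, rfl, rfl, rfl, rfl⟩
  intro i j hij
  fin_cases i <;> fin_cases j <;> simp_all

lemma emb3 {n : ℕ} (a b c : Fin n) (h : [a,b,c].Nodup) :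
   ∃ f : Fin 3 ↪ Fin n, f 0 = a ∧ f 1 = b ∧ f 2 = c := by
  refine ⟨⟨![a,b,c], ?_⟩, rfl, rfl, rfl⟩
  intro i j hij
  fin_cases i <;> fin_cases j <;> simp_all

lemma cardA0 (n : ℕ) (hn : 3 ≤ n) : (univ.filter fun f : Fin 3 ↪ Fin n =>
    (f 0 : ℕ) + 1 = f 1 ∧ (f 1 : ℕ) + 1 = f 2).card = n - 2 := by
  rw [← Finset.card_range (n-2)]
  refine Finset.card_bij (fun f _ => (f 0 : ℕ)) ?_ ?_ ?_
  · intro f hf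
    simp only [mem_filter, mem_univ, true_and, mem_range] at hf ⊢
    omega
  · intro f hf g hg h
    simp only [mem_filter, mem_univ, true_and] at hf hg h
    ext i
    fin_cases i <;> simp <;> omega
  · intro a ha
    simp only [mem_range] at ha
    obtain ⟨f, h0, h1, h2⟩ := emb3 (⟨a, by omega⟩ : Fin n) ⟨a+1, by omega⟩ ⟨a+2, by omega⟩ (by simp)
    exact ⟨f, by simp [h0, h1, h2], by simp [h0]⟩

lemma cardA2a (n : ℕ) (hn : 3 ≤ n) : (univ.filter fun f : Fin 5 ↪ Fin n =>
    ((f 0 : ℕ) + 1 = f 1 ∧ (f 1 : ℕ) + 1 = f 2) ∧ f 0 < f 3 ∧ f 3 < f 4).card = (T3 (n-2)).card := by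
  have hinj : ∀ f : Fin 5 ↪ Fin n, (f 3 : ℕ) ≠ f 1 ∧ (f 3 : ℕ) ≠ f 2 := fun f => by
    simp [← Fin.ext_iff]
  refine Finset.card_bij (fun f _ => ⟨(f 4 : ℕ) - 2, (f 3 : ℕ) - 2, (f 0 : ℕ)⟩) ?_ ?_ ?_
  · intro f hf
    have := hinj f
    simp only [mem_filter, mem_univ, true_and, T3, mem_sigma, mem_range, Fin.lt_def] at hf ⊢
    omega
  · intro f hf g hg h
    have := hinj f
    have := hinj g
    simp only [mem_filter, mem_univ, true_and, Sigma.mk.injEq, heq_eq_eq, Fin.lt_def] at hf hg h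
    ext i
    fin_cases i <;> simp <;> omega
  · rintro ⟨k, j, i⟩ ha
    simp only [T3, mem_sigma, mem_range] at ha
    obtain ⟨f, h0, h1, h2, h3, h4⟩ := emb5 (⟨i, by omega⟩ : Fin n) ⟨i+1, by omega⟩ ⟨i+2, by omega⟩
      ⟨j+2, by omega⟩ ⟨k+2, by omega⟩ (by simp; omega)
    exact ⟨f, by simp [h0, h1, h2, h3, h4]; omega, by simp [h0, h3, h4]⟩

lemma cardA2b (n : ℕ) (hn : 3 ≤ n) : (univ.filter fun f : Fin 5 ↪ Fin n =>
    ((f 0 : ℕ) + 1 = f 1 ∧ (f 1 : ℕ) + 1 = f 2) ∧ f 3 < f 0 ∧ f 0 < f 4).card = (T3 (n-2)).card := by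
  have hinj : ∀ f : Fin 5 ↪ Fin n, (f 4 : ℕ) ≠ f 1 ∧ (f 4 : ℕ) ≠ f 2 := fun f => by
    simp [← Fin.ext_iff]
  refine Finset.card_bij (fun f _ => ⟨(f 4 : ℕ) - 2, (f 0 : ℕ), (f 3 : ℕ)⟩) ?_ ?_ ?_
  · intro f hf
    have := hinj f
    simp only [mem_filter, mem_univ, true_and, T3, mem_sigma, mem_range, Fin.lt_def] at hf ⊢
    omega
  · intro f hf g hg h
    have := hinj f
    have := hinj g
    simp only [mem_filter, mem_univ, true_and, Sigma.mk.injEq, heq_eq_eq, Fin.lt_def] at hf hg h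
    ext i
    fin_cases i <;> simp <;> omega
  · rintro ⟨k, j, i⟩ ha
    simp only [T3, mem_sigma, mem_range] at ha
    obtain ⟨f, h0, h1, h2, h3, h4⟩ := emb5 (⟨j, by omega⟩ : Fin n) ⟨j+1, by omega⟩ ⟨j+2, by omega⟩
      ⟨i, by omega⟩ ⟨k+2, by omega⟩ (by simp; omega)
    exact ⟨f, by simp [h0, h1, h2, h3, h4]; omega, by simp [h0, h3, h4]⟩

lemma cardA2c (n : ℕ) (hn : 3 ≤ n) : (univ.filter fun f : Fin 5 ↪ Fin n =>
    ((f 0 : ℕ) + 1 = f 1 ∧ (f 1 : ℕ) + 1 = f 2) ∧ f 3 < f 4 ∧ f 4 < f 0).card = (T3 (n-2)).card := by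
  refine Finset.card_bij (fun f _ => ⟨(f 0 : ℕ), (f 4 : ℕ), (f 3 : ℕ)⟩) ?_ ?_ ?_
  · intro f hf
    simp only [mem_filter, mem_univ, true_and, T3, mem_sigma, mem_range, Fin.lt_def] at hf ⊢
    omega
  · intro f hf g hg h
    simp only [mem_filter, mem_univ, true_and, Sigma.mk.injEq, heq_eq_eq, Fin.lt_def] at hf hg h
    ext i
    fin_cases i <;> simp <;> omega
  · rintro ⟨k, j, i⟩ ha
    simp only [T3, mem_sigma, mem_range] at ha
    obtain ⟨f, h0, h1, h2, h3, h4⟩ := emb5 (⟨k, by omega⟩ : Fin n) ⟨k+1, by omega⟩ ⟨k+2, by omega⟩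
      ⟨i, by omega⟩ ⟨j, by omega⟩ (by simp; omega)
    exact ⟨f, by simp [h0, h1, h2, h3, h4]; omega, by simp [h0, h3, h4]⟩

def T2 (m : ℕ) : Finset (Σ _ : ℕ, ℕ) := (range m).sigma fun k => range k

lemma card_T2 (m : ℕ) : (((T2 m).card : ℕ) : ℚ) = m * (m - 1) / 2 := by
  have : (T2 m).card = ∑ k ∈ range m, k := by simp [T2]
  rw [this]
  clear this
  induction m with
  | zero => simp
  | succ k ih => rw [Finset.sum_range_succ]; push_cast at *; rw [ih]; ring

lemma cardA1a (n : ℕ) (hn : 3 ≤ n) : (univ.filter fun f : Fin 4 ↪ Fin n =>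
    ((f 0 : ℕ) + 1 = f 1 ∧ (f 1 : ℕ) + 1 = f 2) ∧ f 0 < f 3).card = (T2 (n-2)).card := by
  have hinj : ∀ f : Fin 4 ↪ Fin n, (f 3 : ℕ) ≠ f 1 ∧ (f 3 : ℕ) ≠ f 2 := fun f => by
    simp [← Fin.ext_iff]
  refine Finset.card_bij (fun f _ => ⟨(f 3 : ℕ) - 2, (f 0 : ℕ)⟩) ?_ ?_ ?_
  · intro f hf
    have := hinj f
    simp only [mem_filter, mem_univ, true_and, T2, mem_sigma, mem_range, Fin.lt_def] at hf ⊢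
    omega
  · intro f hf g hg h
    have := hinj f
    have := hinj g
    simp only [mem_filter, mem_univ, true_and, Sigma.mk.injEq, heq_eq_eq, Fin.lt_def] at hf hg h
    ext i
    fin_cases i <;> simp <;> omega
  · rintro ⟨j, i⟩ ha
    simp only [T2, mem_sigma, mem_range] at ha
    obtain ⟨f, h0, h1, h2, h3⟩ := emb4 (⟨i, by omega⟩ : Fin n) ⟨i+1, by omega⟩ ⟨i+2, by omega⟩
      ⟨j+2, by omega⟩ (by simp; omega)
    exact ⟨f, by simp [h0, h1, h2, h3]; omega, by simp [h0, h3]⟩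

lemma cardA1b (n : ℕ) (hn : 3 ≤ n) : (univ.filter fun f : Fin 4 ↪ Fin n =>
    ((f 0 : ℕ) + 1 = f 1 ∧ (f 1 : ℕ) + 1 = f 2) ∧ f 3 < f 0).card = (T2 (n-2)).card := by
  refine Finset.card_bij (fun f _ => ⟨(f 0 : ℕ), (f 3 : ℕ)⟩) ?_ ?_ ?_
  · intro f hf
    simp only [mem_filter, mem_univ, true_and, T2, mem_sigma, mem_range, Fin.lt_def] at hf ⊢
    omega
  · intro f hf g hg h
    simp only [mem_filter, mem_univ, true_and, Sigma.mk.injEq, heq_eq_eq, Fin.lt_def] at hf hg h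
    ext i
    fin_cases i <;> simp <;> omega
  · rintro ⟨j, i⟩ ha
    simp only [T2, mem_sigma, mem_range] at ha
    obtain ⟨f, h0, h1, h2, h3⟩ := emb4 (⟨j, by omega⟩ : Fin n) ⟨j+1, by omega⟩ ⟨j+2, by omega⟩
      ⟨i, by omega⟩ (by simp; omega)
    exact ⟨f, by simp [h0, h1, h2, h3]; omega, by simp [h0, h3]⟩

/-- the points `u, v, w` are sent to consecutive values -/
abbrev cons3 {n : ℕ} (u v w : Fin n) (σ : Perm (Fin n)) : Prop :=
  (σ u : ℕ) + 1 = σ v ∧ (σ v : ℕ) + 1 = σ w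

lemma desc3 (n : ℕ) (hn : 3 ≤ n) : ((n.descFactorial 3 : ℕ) : ℚ) = n * (n - 1) * (n - 2) := by
  obtain ⟨m, rfl⟩ := Nat.exists_eq_add_of_le hn
  simp [Nat.descFactorial_succ]
  rw [show 3 + m - 2 = m + 1 by omega]; push_cast; ring
lemma desc4 (n : ℕ) (hn : 4 ≤ n) : ((n.descFactorial 4 : ℕ) : ℚ) = n * (n - 1) * (n - 2) * (n - 3) := by
  obtain ⟨m, rfl⟩ := Nat.exists_eq_add_of_le hn
  simp [Nat.descFactorial_succ]
  rw [show 4 + m - 3 = m + 1 by omega, show 4 + m - 2 = m + 2 by omega]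
  push_cast; ring
lemma desc5 (n : ℕ) (hn : 5 ≤ n) : ((n.descFactorial 5 : ℕ) : ℚ) = n * (n - 1) * (n - 2) * (n - 3) * (n - 4) := by
  obtain ⟨m, rfl⟩ := Nat.exists_eq_add_of_le hn
  simp [Nat.descFactorial_succ]
  rw [show 5 + m - 4 = m + 1 by omega, show 5 + m - 3 = m + 2 by omega, show 5 + m - 2 = m + 3 by omega]
  push_cast; ring

lemma K0 {n : ℕ} {u v w : Fin n} (h : [u, v, w].Nodup) :
    ((univ.filter fun σ => cons3 u v w σ).card : ℚ) * (n * (n - 1)) = n.factorial := by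
  have hn : 3 ≤ n := by simpa using h.length_le_card
  obtain ⟨e, h0, h1, h2⟩ := emb3 u v w h
  have := fib_count e (fun f => (f 0 : ℕ) + 1 = f 1 ∧ (f 1 : ℕ) + 1 = f 2)
  rw [cardA0 n hn] at this
  simp only [Function.Embedding.trans_apply, Equiv.coe_toEmbedding, h0, h1, h2] at this
  have h' := congrArg (Nat.cast (R := ℚ)) this
  rw [Nat.cast_mul, Nat.cast_mul, desc3 n hn, Nat.cast_sub (by omega)] at h'
  have hh : (3:ℚ) ≤ n := by exact_mod_cast hn
  have : (n:ℚ) - 2 ≠ 0 := by linarith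
  apply mul_right_cancel₀ this
  push_cast at h'
  linear_combination h'

lemma K1a {n : ℕ} {u v w x : Fin n} (h : [u, v, w, x].Nodup) :
    ((univ.filter fun σ => cons3 u v w σ ∧ σ u < σ x).card : ℚ) * (n * (n - 1)) = n.factorial / 2 := by
  have hn : 4 ≤ n := by simpa using h.length_le_card
  obtain ⟨e, h0, h1, h2, h3⟩ := emb4 u v w x h
  have := fib_count e (fun f => ((f 0 : ℕ) + 1 = f 1 ∧ (f 1 : ℕ) + 1 = f 2) ∧ f 0 < f 3)
  rw [cardA1a n (by omega)] at this
  simp only [Function.Embedding.trans_apply, Equiv.coe_toEmbedding, h0, h1, h2, h3] at this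
  have h' := congrArg (Nat.cast (R := ℚ)) this
  rw [Nat.cast_mul, Nat.cast_mul, desc4 n hn, card_T2, Nat.cast_sub (by omega)] at h'
  have hh : (4:ℚ) ≤ n := by exact_mod_cast hn
  have h2 : (n:ℚ) - 2 ≠ 0 := by linarith
  have h3 : (n:ℚ) - 3 ≠ 0 := by linarith
  apply mul_right_cancel₀ h2
  apply mul_right_cancel₀ h3
  push_cast at h'
  linear_combination h'

lemma K1b {n : ℕ} {u v w x : Fin n} (h : [u, v, w, x].Nodup) :
    ((univ.filter fun σ => cons3 u v w σ ∧ σ x < σ u).card : ℚ) * (n * (n - 1)) = n.factorial / 2 := by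
  have hn : 4 ≤ n := by simpa using h.length_le_card
  obtain ⟨e, h0, h1, h2, h3⟩ := emb4 u v w x h
  have := fib_count e (fun f => ((f 0 : ℕ) + 1 = f 1 ∧ (f 1 : ℕ) + 1 = f 2) ∧ f 3 < f 0)
  rw [cardA1b n (by omega)] at this
  simp only [Function.Embedding.trans_apply, Equiv.coe_toEmbedding, h0, h1, h2, h3] at this
  have h' := congrArg (Nat.cast (R := ℚ)) this
  rw [Nat.cast_mul, Nat.cast_mul, desc4 n hn, card_T2, Nat.cast_sub (by omega)] at h'
  have hh : (4:ℚ) ≤ n := by exact_mod_cast hn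
  have h2 : (n:ℚ) - 2 ≠ 0 := by linarith
  have h3 : (n:ℚ) - 3 ≠ 0 := by linarith
  apply mul_right_cancel₀ h2
  apply mul_right_cancel₀ h3
  push_cast at h'
  linear_combination h'

lemma K2arith (n : ℕ) (hn : 5 ≤ n) (k : ℕ)
    (h : k * n.descFactorial 5 = n.factorial * (T3 (n-2)).card) :
    (k : ℚ) * (n * (n - 1)) = n.factorial / 6 := by
  have h' := congrArg (Nat.cast (R := ℚ)) h
  rw [Nat.cast_mul, Nat.cast_mul, desc5 n hn, card_T3, Nat.cast_sub (by omega)] at h'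
  have hh : (5:ℚ) ≤ n := by exact_mod_cast hn
  have h2 : (n:ℚ) - 2 ≠ 0 := by linarith
  have h3 : (n:ℚ) - 3 ≠ 0 := by linarith
  have h4 : (n:ℚ) - 4 ≠ 0 := by linarith
  apply mul_right_cancel₀ h2
  apply mul_right_cancel₀ h3
  apply mul_right_cancel₀ h4
  push_cast at h'
  linear_combination h'

lemma K2a {n : ℕ} {u v w x y : Fin n} (h : [u, v, w, x, y].Nodup) :
    ((univ.filter fun σ => cons3 u v w σ ∧ σ u < σ x ∧ σ x < σ y).card : ℚ) * (n * (n - 1))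
      = n.factorial / 6 := by
  have hn : 5 ≤ n := by simpa using h.length_le_card
  obtain ⟨e, h0, h1, h2, h3, h4⟩ := emb5 u v w x y h
  have := fib_count e (fun f => ((f 0 : ℕ) + 1 = f 1 ∧ (f 1 : ℕ) + 1 = f 2) ∧ f 0 < f 3 ∧ f 3 < f 4)
  rw [cardA2a n (by omega)] at this
  simp only [Function.Embedding.trans_apply, Equiv.coe_toEmbedding, h0, h1, h2, h3, h4] at this
  exact K2arith n hn _ this

lemma K2b {n : ℕ} {u v w x y : Fin n} (h : [u, v, w, x, y].Nodup) :
    ((univ.filter fun σ => cons3 u v w σ ∧ σ x < σ u ∧ σ u < σ y).card : ℚ) * (n * (n - 1))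
      = n.factorial / 6 := by
  have hn : 5 ≤ n := by simpa using h.length_le_card
  obtain ⟨e, h0, h1, h2, h3, h4⟩ := emb5 u v w x y h
  have := fib_count e (fun f => ((f 0 : ℕ) + 1 = f 1 ∧ (f 1 : ℕ) + 1 = f 2) ∧ f 3 < f 0 ∧ f 0 < f 4)
  rw [cardA2b n (by omega)] at this
  simp only [Function.Embedding.trans_apply, Equiv.coe_toEmbedding, h0, h1, h2, h3, h4] at this
  exact K2arith n hn _ this

lemma K2c {n : ℕ} {u v w x y : Fin n} (h : [u, v, w, x, y].Nodup) :
    ((univ.filter fun σ => cons3 u v w σ ∧ σ x < σ y ∧ σ y < σ u).card : ℚ) * (n * (n - 1))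
      = n.factorial / 6 := by
  have hn : 5 ≤ n := by simpa using h.length_le_card
  obtain ⟨e, h0, h1, h2, h3, h4⟩ := emb5 u v w x y h
  have := fib_count e (fun f => ((f 0 : ℕ) + 1 = f 1 ∧ (f 1 : ℕ) + 1 = f 2) ∧ f 3 < f 4 ∧ f 4 < f 0)
  rw [cardA2c n (by omega)] at this
  simp only [Function.Embedding.trans_apply, Equiv.coe_toEmbedding, h0, h1, h2, h3, h4] at this
  exact K2arith n hn _ this

abbrev KK {n : ℕ} (u v w x y z : Fin n) : ℕ :=
  (univ.filter fun σ : Perm (Fin n) => cons3 u v w σ ∧ σ x < σ y ∧ σ y < σ z).card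

lemma KK_swap1 {n : ℕ} {u v w x y z : Fin n} (h : [u, v, w, x, y, z].Nodup) :
    KK u v w x y z = KK u v w y x z := by
  simp at h
  refine Finset.card_bij (fun σ _ => σ * swap x y) ?_ (by simp) (fun σ hσ => ⟨σ * swap x y, ?_, by simp [mul_assoc]⟩)
  · intro σ hσ
    simp only [mem_filter, mem_univ, true_and, cons3, Perm.mul_apply] at hσ ⊢
    rw [swap_apply_left, swap_apply_right, swap_apply_of_ne_of_ne, swap_apply_of_ne_of_ne, swap_apply_of_ne_of_ne, swap_apply_of_ne_of_ne] <;> tauto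
  · simp only [mem_filter, mem_univ, true_and, cons3, Perm.mul_apply] at hσ ⊢
    rw [swap_apply_left, swap_apply_right, swap_apply_of_ne_of_ne, swap_apply_of_ne_of_ne, swap_apply_of_ne_of_ne, swap_apply_of_ne_of_ne] <;> tauto

lemma KK_swap2 {n : ℕ} {u v w x y z : Fin n} (h : [u, v, w, x, y, z].Nodup) :
    KK u v w x y z = KK u v w x z y := by
  simp at h
  refine Finset.card_bij (fun σ _ => σ * swap y z) ?_ (by simp) (fun σ hσ => ⟨σ * swap y z, ?_, by simp [mul_assoc]⟩)
  · intro σ hσ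
    simp only [mem_filter, mem_univ, true_and, cons3, Perm.mul_apply] at hσ ⊢
    rw [swap_apply_left, swap_apply_right, swap_apply_of_ne_of_ne, swap_apply_of_ne_of_ne, swap_apply_of_ne_of_ne, swap_apply_of_ne_of_ne] <;> tauto
  · simp only [mem_filter, mem_univ, true_and, cons3, Perm.mul_apply] at hσ ⊢
    rw [swap_apply_left, swap_apply_right, swap_apply_of_ne_of_ne, swap_apply_of_ne_of_ne, swap_apply_of_ne_of_ne, swap_apply_of_ne_of_ne] <;> tauto

lemma K3 {n : ℕ} {u v w x y z : Fin n} (h : [u, v, w, x, y, z].Nodup) :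
    (KK u v w x y z : ℚ) * (n * (n - 1)) = n.factorial / 6 := by
  have hs : (univ.filter fun σ : Perm (Fin n) => cons3 u v w σ).card =
     KK u v w x y z + KK u v w x z y + KK u v w y x z + KK u v w y z x + KK u v w z x y + KK u v w z y x := by
    simp only [KK, Finset.card_filter, ← Finset.sum_add_distrib]
    refine Finset.sum_congr rfl fun σ _ => ?_
    have h1 : σ x ≠ σ y := by simp at h ⊢; tauto
    have h2 : σ x ≠ σ z := by simp at h ⊢; tauto
    have h3 : σ y ≠ σ z := by simp at h ⊢; tauto
    by_cases hc : cons3 u v w σ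
    · simp only [and_iff_right hc, if_pos hc]
      split_ifs <;> omega
    · simp [hc]
  have e1 : KK u v w x z y = KK u v w x y z := (KK_swap2 h).symm
  have e2 : KK u v w y x z = KK u v w x y z := (KK_swap1 h).symm
  have e3 : KK u v w y z x = KK u v w x y z := by
    rw [← e2]; exact KK_swap2 (by simp at h ⊢; tauto)
  have e4 : KK u v w z x y = KK u v w x y z := by
    rw [← e1]; exact KK_swap1 (by simp at h ⊢; tauto)
  have e5 : KK u v w z y x = KK u v w x y z := by
    rw [← e4]; exact KK_swap2 (by simp at h ⊢; tauto)
  rw [e1, e2, e3, e4, e5] at hs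
  have := K0 (u := u) (v := v) (w := w) (by simp at h ⊢; tauto)
  rw [hs] at this
  push_cast at this
  linarith

abbrev dl {n : ℕ} (a b : Fin n) : ℚ := if a = b then 1 else 0

def gv {n : ℕ} (u v w x y z : Fin n) : ℚ :=
  1/6 + 1/3 * (dl x u * dl y v + dl x u * dl y w + dl x v * dl y w
    + dl y u * dl z v + dl y u * dl z w + dl y v * dl z w)
  - 1/6 * (dl x v * dl y u + dl x w * dl y v + dl x w * dl y u
    + dl y v * dl z u + dl y w * dl z v + dl y w * dl z u
    + dl x u * dl z w + dl x w * dl z u + dl x u * dl z v + dl x v * dl z w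
    + dl x v * dl z u + dl x w * dl z v)
  + 1/3 * (dl x u * dl y v * dl z w) - 1/6 * (dl x v * dl y u * dl z w)
  - 1/6 * (dl x u * dl y w * dl z v) + 1/3 * (dl x w * dl y v * dl z u)
  - 1/6 * (dl x v * dl y w * dl z u) - 1/6 * (dl x w * dl y u * dl z v)

lemma perm_ne {n : ℕ} (σ : Perm (Fin n)) {a b : Fin n} (h : a ≠ b) : (σ a : ℕ) ≠ σ b := by
  simpa [← Fin.ext_iff] using h

lemma L2a {n : ℕ} {u v w s y z : Fin n} (hs : s = u ∨ s = v ∨ s = w) (h : [u, v, w, y, z].Nodup) :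
    (KK u v w s y z : ℚ) * (n * (n - 1)) = n.factorial / 6 := by
  rw [← K2a h]
  refine congrArg (fun k : ℕ => (k : ℚ) * (n * (n - 1))) (congrArg Finset.card (Finset.filter_congr fun σ _ => ?_))
  have h' := h
  simp at h'
  have h1 := perm_ne σ h'.1.2.2.1
  have h2 := perm_ne σ h'.2.1.2.1
  have h3 := perm_ne σ h'.2.2.1.1
  simp only [cons3, Fin.lt_def]
  rcases hs with rfl | rfl | rfl <;> omega

lemma L2b {n : ℕ} {u v w s y z : Fin n} (hs : s = u ∨ s = v ∨ s = w) (h : [u, v, w, y, z].Nodup) :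
    (KK u v w y s z : ℚ) * (n * (n - 1)) = n.factorial / 6 := by
  rw [← K2b h]
  refine congrArg (fun k : ℕ => (k : ℚ) * (n * (n - 1))) (congrArg Finset.card (Finset.filter_congr fun σ _ => ?_))
  have h' := h
  simp at h'
  have h1 := perm_ne σ h'.1.2.2.1
  have h2 := perm_ne σ h'.2.1.2.1
  have h3 := perm_ne σ h'.2.2.1.1
  have h1 := perm_ne σ h'.1.2.2.2
  have h2 := perm_ne σ h'.2.1.2.2
  have h3 := perm_ne σ h'.2.2.1.2
  simp only [cons3, Fin.lt_def]
  rcases hs with rfl | rfl | rfl <;> omega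

lemma L2c {n : ℕ} {u v w s y z : Fin n} (hs : s = u ∨ s = v ∨ s = w) (h : [u, v, w, y, z].Nodup) :
    (KK u v w y z s : ℚ) * (n * (n - 1)) = n.factorial / 6 := by
  rw [← K2c h]
  refine congrArg (fun k : ℕ => (k : ℚ) * (n * (n - 1))) (congrArg Finset.card (Finset.filter_congr fun σ _ => ?_))
  have h' := h
  simp at h'
  have h1 := perm_ne σ h'.1.2.2.2
  have h2 := perm_ne σ h'.2.1.2.2
  have h3 := perm_ne σ h'.2.2.1.2
  simp only [cons3, Fin.lt_def]
  rcases hs with rfl | rfl | rfl <;> omega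

lemma L1a {n : ℕ} {u v w s t z : Fin n} (hs : s = u ∧ t = v ∨ s = u ∧ t = w ∨ s = v ∧ t = w)
    (h : [u, v, w, z].Nodup) :
    (KK u v w s t z : ℚ) * (n * (n - 1)) = n.factorial / 2 := by
  rw [← K1a h]
  refine congrArg (fun k : ℕ => (k : ℚ) * (n * (n - 1))) (congrArg Finset.card (Finset.filter_congr fun σ _ => ?_))
  have h' := h
  simp at h'
  have h1 := perm_ne σ h'.1.2.2
  have h2 := perm_ne σ h'.2.1.2
  have h3 := perm_ne σ h'.2.2
  simp only [cons3, Fin.lt_def]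
  rcases hs with ⟨rfl, rfl⟩ | ⟨rfl, rfl⟩ | ⟨rfl, rfl⟩ <;> omega

lemma L1b {n : ℕ} {u v w s t z : Fin n} (hs : s = u ∧ t = v ∨ s = u ∧ t = w ∨ s = v ∧ t = w)
    (h : [u, v, w, z].Nodup) :
    (KK u v w z s t : ℚ) * (n * (n - 1)) = n.factorial / 2 := by
  rw [← K1b h]
  refine congrArg (fun k : ℕ => (k : ℚ) * (n * (n - 1))) (congrArg Finset.card (Finset.filter_congr fun σ _ => ?_))
  have h' := h
  simp at h'
  have h1 := perm_ne σ h'.1.2.2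
  have h2 := perm_ne σ h'.2.1.2
  have h3 := perm_ne σ h'.2.2
  simp only [cons3, Fin.lt_def]
  rcases hs with ⟨rfl, rfl⟩ | ⟨rfl, rfl⟩ | ⟨rfl, rfl⟩ <;> omega

lemma L0 {n : ℕ} {u v w : Fin n} (h : [u, v, w].Nodup) :
    (KK u v w u v w : ℚ) * (n * (n - 1)) = n.factorial := by
  rw [← K0 h]
  refine congrArg (fun k : ℕ => (k : ℚ) * (n * (n - 1))) (congrArg Finset.card (Finset.filter_congr fun σ _ => ?_))
  simp only [cons3, Fin.lt_def]
  omega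

lemma Lz {n : ℕ} {u v w x y z : Fin n} 
    (h : ∀ σ : Perm (Fin n), ¬ (((σ u : ℕ) + 1 = σ v ∧ (σ v : ℕ) + 1 = σ w) ∧ (σ x : ℕ) < σ y ∧ (σ y : ℕ) < σ z)) :
    (KK u v w x y z : ℚ) * (n * (n - 1)) = 0 := by
  have : KK u v w x y z = 0 := by
    rw [KK, Finset.card_eq_zero, Finset.filter_eq_empty_iff]
    intro σ _
    exact h σ
  rw [this]; simp

lemma LzB {n : ℕ} {u v w z : Fin n} (hz : z ≠ v) :
    (KK u v w u z w : ℚ) * (n * (n - 1)) = 0 := by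
  refine Lz fun σ => ?_
  have := perm_ne σ hz
  omega

set_option maxHeartbeats 4000000 in
lemma KKval {n : ℕ} {u v w x y z : Fin n} (h : [u, v, w].Nodup) (h' : [x, y, z].Nodup) :
    (KK u v w x y z : ℚ) * (n * (n - 1)) = n.factorial * gv u v w x y z := by
  have c : ∀ s : Fin n, (s = u ∨ s = v ∨ s = w) ∨ (s ≠ u ∧ s ≠ v ∧ s ≠ w) := by intro s; tauto
  have hh := h
  have hh' := h'
  simp at hh hh'
  obtain ⟨⟨huv, huw⟩, hvw⟩ := hh
  obtain ⟨⟨hxy, hxz⟩, hyz⟩ := hh'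
  have hvu := Ne.symm huv
  have hwu := Ne.symm huw
  have hwv := Ne.symm hvw
  have hcx := c x
  have hcy := c y
  have hcz := c z
  clear c
  rcases hcx with hx | ⟨hx1, hx2, hx3⟩ <;> rcases hcy with hy | ⟨hy1, hy2, hy3⟩ <;>
    rcases hcz with hz | ⟨hz1, hz2, hz3⟩
  · rcases hx with rfl | rfl | rfl <;> rcases hy with rfl | rfl | rfl <;>
      first | (exfalso; exact hxy rfl) | rcases hz with rfl | rfl | rfl <;>
      first | (exfalso; exact hxz rfl) | (exfalso; exact hyz rfl) | skip
    · rw [L0 h]; simp [gv, dl, *]; norm_num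
    all_goals
      rw [Lz (by intro σ; omega)]; simp [gv, dl, *] <;> norm_num
  · rcases hx with rfl | rfl | rfl <;> rcases hy with rfl | rfl | rfl <;>
      first
      | (exfalso; exact hxy rfl)
      | (rw [Lz (by intro σ; omega)]; simp [gv, dl, *]; done)
      | (rw [L1a (by simp) (by simp; tauto)]; simp [gv, dl, *]; ring; done)
  · rcases hx with rfl | rfl | rfl <;> rcases hz with rfl | rfl | rfl <;>
      first
      | (exfalso; exact hxz rfl)
      | (rw [LzB hy2]; simp [gv, dl, *]; done)
      | (rw [Lz (by intro σ; have := perm_ne σ hy1; have := perm_ne σ hy2; have := perm_ne σ hy3; omega)]; simp [gv, dl, *]; done)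
  · rw [L2a hx (by simp; tauto)]
    rcases hx with rfl | rfl | rfl <;> simp [gv, dl, *] <;> ring
  · rcases hy with rfl | rfl | rfl <;> rcases hz with rfl | rfl | rfl <;>
      first
      | (exfalso; exact hyz rfl)
      | (rw [Lz (by intro σ; omega)]; simp [gv, dl, *]; done)
      | (rw [L1b (by simp) (by simp; tauto)]; simp [gv, dl, *]; ring; done)
  · rw [L2b hy (by simp; tauto)]
    rcases hy with rfl | rfl | rfl <;> simp [gv, dl, *] <;> ring
  · rw [L2c hz (by simp; tauto)]
    rcases hz with rfl | rfl | rfl <;> simp [gv, dl, *] <;> ring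
  · rw [K3 (by simp; tauto)]
    simp [gv, dl, *]; ring

lemma sum3_swap12 {α : Type*} [Fintype α] (f : α → α → α → ℚ) :
    ∑ u, ∑ v, ∑ w, f v u w = ∑ u, ∑ v, ∑ w, f u v w := Finset.sum_comm

lemma sum3_swap23 {α : Type*} [Fintype α] (f : α → α → α → ℚ) :
    ∑ u, ∑ v, ∑ w, f u w v = ∑ u, ∑ v, ∑ w, f u v w :=
  Finset.sum_congr rfl fun _ _ => Finset.sum_comm

lemma sum3_rot {α : Type*} [Fintype α] (f : α → α → α → ℚ) :
    ∑ u, ∑ v, ∑ w, f v w u = ∑ u, ∑ v, ∑ w, f u v w := by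
  rw [sum3_swap12 (fun u v w => f u w v), sum3_swap23]

lemma sum3_rot' {α : Type*} [Fintype α] (f : α → α → α → ℚ) :
    ∑ u, ∑ v, ∑ w, f w u v = ∑ u, ∑ v, ∑ w, f u v w := by
  rw [sum3_swap23 (fun u v w => f v u w), sum3_swap12]

lemma sum3_swap13 {α : Type*} [Fintype α] (f : α → α → α → ℚ) :
    ∑ u, ∑ v, ∑ w, f w v u = ∑ u, ∑ v, ∑ w, f u v w := by
  rw [sum3_swap12 (fun u v w => f w u v), sum3_rot']

def nd {n : ℕ} (u v w : Fin n) : ℚ := if u ≠ v ∧ u ≠ w ∧ v ≠ w then 1 else 0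

lemma nd12 {n : ℕ} (u v w : Fin n) : nd v u w = nd u v w := by
  unfold nd; congr 1; simp only [eq_iff_iff]; tauto
lemma nd23 {n : ℕ} (u v w : Fin n) : nd u w v = nd u v w := by
  unfold nd; congr 1; simp only [eq_iff_iff]; tauto

lemma nd_eq {n : ℕ} (u v w : Fin n) :
    nd u v w = 1 - dl u v - dl u w - dl v w + 2 * (dl u v * dl v w) := by
  unfold nd dl
  by_cases h1 : u = v <;> by_cases h2 : v = w <;> by_cases h3 : u = w <;> simp_all <;> norm_num

lemma sum_nd {n : ℕ} (f g h : Fin n → ℚ) :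
    ∑ u, ∑ v, ∑ w, nd u v w * (f u * g v * h w) =
      (∑ u, f u) * (∑ u, g u) * (∑ u, h u) - (∑ u, f u * g u) * (∑ u, h u)
      - (∑ u, f u * h u) * (∑ u, g u) - (∑ u, f u) * (∑ u, g u * h u) + 2 * ∑ u, f u * g u * h u := by
  have e0 : ∑ u, ∑ v, ∑ w, (f u * g v * h w) = (∑ u, f u) * (∑ u, g u) * (∑ u, h u) := by
    simp only [Finset.sum_mul, Finset.mul_sum]
    rw [← sum3_swap13]
  have e1 : ∑ u, ∑ v, ∑ w, dl u v * (f u * g v * h w) = (∑ u, f u * g u) * (∑ u, h u) := by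
    rw [Finset.sum_mul_sum]
    refine Finset.sum_congr rfl fun u _ => ?_
    rw [Finset.sum_comm]
    simp [dl]
  have e2 : ∑ u, ∑ v, ∑ w, dl u w * (f u * g v * h w) = (∑ u, f u * h u) * (∑ u, g u) := by
    rw [Finset.sum_mul_sum]
    refine Finset.sum_congr rfl fun u _ => Finset.sum_congr rfl fun v _ => ?_
    simp [dl]; ring
  have e3 : ∑ u, ∑ v, ∑ w, dl v w * (f u * g v * h w) = (∑ u, f u) * (∑ u, g u * h u) := by
    rw [Finset.sum_mul_sum]
    refine Finset.sum_congr rfl fun u _ => Finset.sum_congr rfl fun v _ => ?_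
    simp [dl]; ring
  have e4 : ∑ u, ∑ v, ∑ w, (dl u v * dl v w) * (f u * g v * h w) = ∑ u, f u * g u * h u := by
    refine Finset.sum_congr rfl fun u _ => ?_
    simp [dl]
  rw [← e0, ← e1, ← e2, ← e3, ← e4]
  simp only [Finset.mul_sum, ← Finset.sum_sub_distrib, ← Finset.sum_add_distrib]
  refine Finset.sum_congr rfl fun _ _ => Finset.sum_congr rfl fun _ _ => Finset.sum_congr rfl fun _ _ => ?_
  rw [nd_eq]; ring

lemma sum_gv {n : ℕ} (π : Perm (Fin n)) :
    ∑ u, ∑ v, ∑ w, nd u v w * gv u v w (π u) (π v) (π w) =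
      1/6 * ∑ u : Fin n, ∑ v : Fin n, ∑ w : Fin n, nd u v w
      + 1/2 * ∑ u, ∑ v, ∑ w, nd u v w * (dl (π u) u * dl (π v) v)
      - 1/2 * ∑ u, ∑ v, ∑ w, nd u v w * (dl (π u) v * dl (π v) u)
      + 1/3 * ∑ u, ∑ v, ∑ w, nd u v w * (dl (π u) u * dl (π v) v * dl (π w) w)
      - 1/3 * ∑ u, ∑ v, ∑ w, nd u v w * (dl (π u) v * dl (π v) w * dl (π w) u) := by
  obtain ⟨a1, ha1⟩ : ∃ a : Fin n → Fin n → Fin n → ℚ, a = fun u v w => nd u v w * (dl (π u) u * dl (π v) v) := ⟨_, rfl⟩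
  obtain ⟨a2, ha2⟩ : ∃ a : Fin n → Fin n → Fin n → ℚ, a = fun u v w => nd u v w * (dl (π u) v * dl (π v) u) := ⟨_, rfl⟩
  obtain ⟨a3, ha3⟩ : ∃ a : Fin n → Fin n → Fin n → ℚ, a = fun u v w => nd u v w * (dl (π u) u * dl (π v) w) := ⟨_, rfl⟩
  obtain ⟨a4, ha4⟩ : ∃ a : Fin n → Fin n → Fin n → ℚ, a = fun u v w => nd u v w * (dl (π u) v * dl (π v) w) := ⟨_, rfl⟩
  obtain ⟨b1, hb1⟩ : ∃ a : Fin n → Fin n → Fin n → ℚ, a = fun u v w => nd u v w * (dl (π u) u * dl (π v) v * dl (π w) w) := ⟨_, rfl⟩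
  obtain ⟨b2, hb2⟩ : ∃ a : Fin n → Fin n → Fin n → ℚ, a = fun u v w => nd u v w * (dl (π u) u * dl (π v) w * dl (π w) v) := ⟨_, rfl⟩
  obtain ⟨b3, hb3⟩ : ∃ a : Fin n → Fin n → Fin n → ℚ, a = fun u v w => nd u v w * (dl (π u) v * dl (π v) w * dl (π w) u) := ⟨_, rfl⟩
  have key : ∀ u v w, nd u v w * gv u v w (π u) (π v) (π w) =
      1/6 * nd u v w + 1/3 * a1 u v w + 1/3 * a3 u v w + 1/3 * a4 u v w + 1/3 * a4 w v u + 1/3 * a3 w v u + 1/3 * a1 v w u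
      - 1/6 * a2 u v w - 1/6 * a3 v u w - 1/6 * a4 v u w - 1/6 * a3 v w u - 1/6 * a2 v w u - 1/6 * a4 v w u
      - 1/6 * a1 u w v - 1/6 * a2 u w v - 1/6 * a3 u w v - 1/6 * a3 w u v - 1/6 * a4 w u v - 1/6 * a4 u w v
      + 1/3 * b1 u v w - 1/6 * b2 w u v - 1/6 * b2 u v w + 1/3 * b2 v u w - 1/6 * b3 u v w - 1/6 * b3 u w v := by
    intro u v w
    have n1 : nd v u w = nd u v w := nd12 _ _ _
    have n2 : nd u w v = nd u v w := nd23 _ _ _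
    have n3 : nd v w u = nd u v w := by rw [nd23, nd12]
    have n4 : nd w u v = nd u v w := by rw [nd12, nd23]
    have n5 : nd w v u = nd u v w := by rw [nd23, n4]
    simp only [ha1, ha2, ha3, ha4, hb1, hb2, hb3, n1, n2, n3, n4, n5, gv]
    ring
  simp only [key, Finset.sum_add_distrib, Finset.sum_sub_distrib, ← Finset.mul_sum]
  rw [sum3_swap13 a4, sum3_swap13 a3, sum3_rot a1, sum3_swap12 a3, sum3_swap12 a4, sum3_rot a3, sum3_rot a2,
    sum3_rot a4, sum3_swap23 a1, sum3_swap23 a2, sum3_swap23 a3, sum3_rot' a3, sum3_rot' a4, sum3_swap23 a4,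
    sum3_rot' b2, sum3_swap12 b2, sum3_swap23 b3]
  have g1 : ∑ u, ∑ v, ∑ w, nd u v w * (dl (π u) u * dl (π v) v) = ∑ u, ∑ v, ∑ w, a1 u v w := by rw [ha1]
  have g2 : ∑ u, ∑ v, ∑ w, nd u v w * (dl (π u) v * dl (π v) u) = ∑ u, ∑ v, ∑ w, a2 u v w := by rw [ha2]
  have g3 : ∑ u, ∑ v, ∑ w, nd u v w * (dl (π u) u * dl (π v) v * dl (π w) w) = ∑ u, ∑ v, ∑ w, b1 u v w := by rw [hb1]
  have g4 : ∑ u, ∑ v, ∑ w, nd u v w * (dl (π u) v * dl (π v) w * dl (π w) u) = ∑ u, ∑ v, ∑ w, b3 u v w := by rw [hb3]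
  rw [g1, g2, g3, g4]
  ring

lemma sum_gv' {n : ℕ} (π : Perm (Fin n)) (p q r : ℚ)
    (hp : ∑ u, dl (π u) u = p)
    (hq : ∑ u, (if π u ≠ u ∧ π (π u) = u then (1:ℚ) else 0) = 2 * q)
    (hr : ∑ u, (if π u ≠ u ∧ π (π (π u)) = u then (1:ℚ) else 0) = 3 * r) :
    ∑ u, ∑ v, ∑ w, nd u v w * gv u v w (π u) (π v) (π w) =
      n * (n - 1) * (n - 2) / 6 + p * (p - 1) * (n - 2) / 2 - q * (n - 2) + p * (p - 1) * (p - 2) / 3 - r := by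
  rw [sum_gv]
  have i2 : ∀ u, dl (π u) u * dl (π u) u = dl (π u) u := by intro u; simp [dl]
  have h0 := sum_nd (n := n) (fun _ => 1) (fun _ => 1) (fun _ => 1)
  have h1 := sum_nd (n := n) (fun u => dl (π u) u) (fun u => dl (π u) u) (fun _ => 1)
  have h3 := sum_nd (n := n) (fun u => dl (π u) u) (fun u => dl (π u) u) (fun u => dl (π u) u)
  simp only [mul_one, i2, hp] at h0 h1 h3
  simp only [Finset.sum_const, Finset.card_univ, Fintype.card_fin, nsmul_eq_mul, mul_one] at h0 h1
  have h2 : ∑ u, ∑ v, ∑ w, nd u v w * (dl (π u) v * dl (π v) u) = (n - 2) * (2 * q) := by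
    rw [← hq, Finset.mul_sum]
    refine Finset.sum_congr rfl fun u _ => ?_
    rw [Finset.sum_eq_single (π u)]
    · rw [← Finset.sum_mul]
      simp only [nd_eq, Finset.sum_add_distrib, Finset.sum_sub_distrib, ← Finset.mul_sum]
      simp only [dl]
      by_cases h : π u = u
      · simp [h]; ring
      · have h' : u ≠ π u := fun h' => h h'.symm
        simp [h, h']; congr 1; ring
    · intro b _ hb
      simp [dl, hb.symm]
    · simp
  have h4 : ∑ u, ∑ v, ∑ w, nd u v w * (dl (π u) v * dl (π v) w * dl (π w) u) = 3 * r := by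
    rw [← hr]
    refine Finset.sum_congr rfl fun u _ => ?_
    rw [Finset.sum_eq_single (π u), Finset.sum_eq_single (π (π u))]
    · simp only [dl, nd]
      by_cases h : π u = u
      · simp [h]
      · have h' : u ≠ π u := fun h' => h h'.symm
        by_cases h3 : π (π (π u)) = u
        · have : u ≠ π (π u) := by
            intro h4; rw [← h4] at h3; exact h h3
          simp [h, h', h3, this]
        · simp [h3]
    · intro b _ hb
      simp [dl, hb.symm]
    · simp
    · intro b _ hb
      simp [dl, hb.symm]
    · simp
  rw [h0, h1, h2, h3, h4]
  ring

lemma sum_occ {n : ℕ} (π : Perm (Fin n)) :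
    (∑ σ : Perm (Fin n), ((((Finset.univ : Finset (Fin n × Fin n × Fin n)).filter fun x =>
          (x.1 : ℕ) + 1 = (x.2.1 : ℕ) ∧ (x.2.1 : ℕ) + 1 = (x.2.2 : ℕ) ∧
          (σ * π * σ⁻¹) x.1 < (σ * π * σ⁻¹) x.2.1 ∧ (σ * π * σ⁻¹) x.2.1 < (σ * π * σ⁻¹) x.2.2).card : ℚ)))
      * (n * (n - 1)) =
    n.factorial * ∑ u, ∑ v, ∑ w, nd u v w * gv u v w (π u) (π v) (π w) := by
  have h1 : ∀ σ : Perm (Fin n), ((((Finset.univ : Finset (Fin n × Fin n × Fin n)).filter fun x =>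
          (x.1 : ℕ) + 1 = (x.2.1 : ℕ) ∧ (x.2.1 : ℕ) + 1 = (x.2.2 : ℕ) ∧
          (σ * π * σ⁻¹) x.1 < (σ * π * σ⁻¹) x.2.1 ∧ (σ * π * σ⁻¹) x.2.1 < (σ * π * σ⁻¹) x.2.2).card : ℚ))
      = ∑ x : Fin n × Fin n × Fin n, if cons3 x.1 x.2.1 x.2.2 σ ∧ σ (π x.1) < σ (π x.2.1) ∧ σ (π x.2.1) < σ (π x.2.2) then 1 else 0 := by
    intro σ
    rw [Finset.card_filter]
    push_cast
    symm
    refine Fintype.sum_equiv (Equiv.prodCongr σ (Equiv.prodCongr σ σ)) _ _ fun x => ?_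
    simp [cons3, and_assoc]
  simp only [h1]
  rw [Finset.sum_comm, Finset.sum_mul, Finset.mul_sum, Fintype.sum_prod_type]
  refine Finset.sum_congr rfl fun u _ => ?_
  rw [Fintype.sum_prod_type, Finset.mul_sum]
  refine Finset.sum_congr rfl fun v _ => ?_
  rw [Finset.mul_sum]
  refine Finset.sum_congr rfl fun w _ => ?_
  have h2 : (∑ σ : Perm (Fin n), if cons3 u v w σ ∧ σ (π u) < σ (π v) ∧ σ (π v) < σ (π w) then (1:ℚ) else 0)
      = KK u v w (π u) (π v) (π w) := by
    rw [KK, Finset.card_filter]; push_cast; rfl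
  simp only [h2]
  by_cases h : u ≠ v ∧ u ≠ w ∧ v ≠ w
  · rw [KKval (by simp; tauto) (by simp; tauto), nd, if_pos h, one_mul]
  · rw [nd, if_neg h, zero_mul, mul_zero]
    refine Lz fun σ => ?_
    have : u = v ∨ u = w ∨ v = w := by tauto
    rcases this with rfl | rfl | rfl <;> omega

lemma count_cyc {n : ℕ} (π : Perm (Fin n)) (k : ℕ) :
    (univ.filter fun u => π u ≠ u ∧ (π.cycleOf u).support.card = k).card = k * π.cycleType.count k := by
  rw [Perm.cycleType_def, Multiset.count_map]
  have hm : ∀ u ∈ (univ.filter fun u => π u ≠ u ∧ (π.cycleOf u).support.card = k),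
      π.cycleOf u ∈ π.cycleFactorsFinset.filter (fun c => k = c.support.card) := by
    intro u hu
    simp only [mem_filter, mem_univ, true_and] at hu
    simp [Perm.cycleOf_mem_cycleFactorsFinset_iff, hu.1, hu.2]
  rw [Finset.card_eq_sum_card_fiberwise hm]
  rw [Finset.sum_congr rfl (g := fun _ => k)]
  · rw [Finset.sum_const, smul_eq_mul, mul_comm]; rfl
  · intro c hc
    simp only [mem_filter] at hc
    rw [hc.2]
    congr 1
    ext u
    simp only [mem_filter, mem_univ, true_and]
    constructor
    · rintro ⟨⟨h1, h2⟩, rfl⟩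
      rw [Perm.mem_support, Perm.cycleOf_apply_self]; exact h1
    · intro hu
      have := Perm.cycle_is_cycleOf hu hc.1
      refine ⟨⟨?_, by rw [← this]⟩, this.symm⟩
      exact Perm.mem_support.1 (Perm.mem_cycleFactorsFinset_support_le hc.1 hu)

lemma cyc_prime {n : ℕ} (π : Perm (Fin n)) (k : ℕ) (hk : k.Prime) (u : Fin n) (hu : π u ≠ u) :
    (π.cycleOf u).support.card = k ↔ (π ^ k) u = u := by
  have hc := Perm.isCycle_cycleOf π hu
  rw [← hc.orderOf]
  constructor
  · rintro h
    rw [← Perm.cycleOf_pow_apply_self, ← h, pow_orderOf_eq_one]; rfl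
  · intro h
    have : (π.cycleOf u) ^ k = 1 := by
      rw [hc.pow_eq_one_iff]
      exact ⟨u, by simpa using hu, by rw [Perm.cycleOf_pow_apply_self, h]⟩
    rcases (Nat.dvd_prime hk).1 (orderOf_dvd_of_pow_eq_one this) with h1 | h1
    · rw [orderOf_eq_one_iff, Perm.cycleOf_eq_one_iff] at h1
      exact absurd h1 hu
    · exact h1

lemma count_prime {n : ℕ} (π : Perm (Fin n)) (k : ℕ) (hk : k.Prime) :
    ∑ u, (if π u ≠ u ∧ (π ^ k) u = u then (1:ℚ) else 0) = k * (π.partition.parts.count k : ℕ) := by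
  have h : π.partition.parts.count k = π.cycleType.count k := by
    rw [Perm.parts_partition, Multiset.count_add, Multiset.count_replicate, if_neg hk.one_lt.ne, add_zero]
  rw [h, ← Nat.cast_mul, ← count_cyc, Finset.card_filter]
  push_cast
  refine Finset.sum_congr rfl fun u _ => ?_
  congr 1
  simp only [eq_iff_iff]
  constructor
  · rintro ⟨h1, h2⟩; exact ⟨h1, (cyc_prime π k hk u h1).2 h2⟩
  · rintro ⟨h1, h2⟩; exact ⟨h1, (cyc_prime π k hk u h1).1 h2⟩

lemma count_one {n : ℕ} (π : Perm (Fin n)) :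
    ∑ u, dl (π u) u = (π.partition.parts.count 1 : ℕ) := by
  have h : π.cycleType.count 1 = 0 := by
    rw [Multiset.count_eq_zero]; intro h; exact absurd (Perm.two_le_of_mem_cycleType h) (by norm_num)
  rw [Perm.parts_partition, Multiset.count_add, Multiset.count_replicate, if_pos rfl, h, zero_add,
    ← Finset.card_compl]
  have : π.supportᶜ = univ.filter fun u => π u = u := by
    ext u; simp
  rw [this, Finset.card_filter]
  push_cast; rfl

theorem stmt11 (n : ℕ) (hn : 3 ≤ n) (lam : n.Partition)
    (p q r X₁ X₂ X₃ X₄ : ℚ)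
    (hp : p = (lam.parts.count 1 : ℚ)) (hq : q = (lam.parts.count 2 : ℚ))
    (hr : r = (lam.parts.count 3 : ℚ))
    (hX1 : X₁ = p - 1) (hX2 : X₂ = (p - 1) * (p - 2) / 2 + q - 1)
    (hX3 : X₃ = (p - 1) * (p - 2) / 2 - q)
    (hX4 : X₄ = (p - 1) * (p - 2) * (p - 3) / 3 - p - r + 2) :
    (∑ π ∈ conjClass n lam,
      ((((Finset.univ : Finset (Fin n × Fin n × Fin n)).filter fun x =>
          (x.1 : ℕ) + 1 = (x.2.1 : ℕ) ∧ (x.2.1 : ℕ) + 1 = (x.2.2 : ℕ) ∧ π x.1 < π x.2.1 ∧ π x.2.1 < π x.2.2).card : ℚ)))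
    = ((conjClass n lam).card : ℚ) *
      (((n : ℚ) - 2) / 6 + X₁ / (n : ℚ) + X₂ / ((n : ℚ) * ((n : ℚ) - 1))
        + X₃ / (n : ℚ) + X₄ / ((n : ℚ) * ((n : ℚ) - 1))) := by
  obtain ⟨occ, hocc⟩ : ∃ occ : Perm (Fin n) → ℚ, occ = fun π => ((((Finset.univ : Finset (Fin n × Fin n × Fin n)).filter fun x =>
          (x.1 : ℕ) + 1 = (x.2.1 : ℕ) ∧ (x.2.1 : ℕ) + 1 = (x.2.2 : ℕ) ∧ π x.1 < π x.2.1 ∧ π x.2.1 < π x.2.2).card : ℚ)) := ⟨_, rfl⟩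
  have hgoal : (∑ π ∈ conjClass n lam,
      ((((Finset.univ : Finset (Fin n × Fin n × Fin n)).filter fun x =>
          (x.1 : ℕ) + 1 = (x.2.1 : ℕ) ∧ (x.2.1 : ℕ) + 1 = (x.2.2 : ℕ) ∧ π x.1 < π x.2.1 ∧ π x.2.1 < π x.2.2).card : ℚ)))
      = ∑ π ∈ conjClass n lam, occ π := by rw [hocc]
  rw [hgoal]
  have hA : ∀ π ∈ conjClass n lam, (∑ σ : Perm (Fin n), occ (σ * π * σ⁻¹)) * (n * (n - 1)) =
      n.factorial * (n * (n - 1) * (n - 2) / 6 + p * (p - 1) * (n - 2) / 2 - q * (n - 2)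
        + p * (p - 1) * (p - 2) / 3 - r) := by
    intro π hπ
    simp only [conjClass, mem_filter, mem_univ, true_and] at hπ
    rw [hocc, sum_occ, sum_gv' π p q r]
    · rw [count_one, hπ, hp]
    · have := count_prime π 2 Nat.prime_two
      rw [hπ] at this
      rw [hq]; exact this
    · have := count_prime π 3 Nat.prime_three
      rw [hπ] at this
      rw [hr]; exact this
  have hB : ∀ σ : Perm (Fin n), ∑ π ∈ conjClass n lam, occ (σ * π * σ⁻¹) = ∑ π ∈ conjClass n lam, occ π := by
    intro σ
    have hmem : ∀ (σ π : Perm (Fin n)), π ∈ conjClass n lam → σ * π * σ⁻¹ ∈ conjClass n lam := by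
      intro σ π hπ
      simp only [conjClass, mem_filter, mem_univ, true_and] at hπ ⊢
      rw [← hπ]
      exact congrArg Nat.Partition.parts (Perm.partition_eq_of_isConj.1 (isConj_iff.2 ⟨σ, rfl⟩)).symm
    refine Finset.sum_bij' (fun π _ => σ * π * σ⁻¹) (fun π _ => σ⁻¹ * π * σ) (hmem σ) ?_ ?_ ?_ ?_
    · intro π hπ
      simpa using hmem σ⁻¹ π hπ
    · intro π _; group
    · intro π _; group
    · intro π _; rfl
  have hC : ∑ π ∈ conjClass n lam, ∑ σ : Perm (Fin n), occ (σ * π * σ⁻¹)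
      = n.factorial * ∑ π ∈ conjClass n lam, occ π := by
    rw [Finset.sum_comm, Finset.sum_congr rfl (fun σ _ => hB σ), Finset.sum_const, Finset.card_univ,
      Fintype.card_perm, Fintype.card_fin, nsmul_eq_mul]
  have hD := congrArg (· * ((n:ℚ) * (n - 1))) hC
  beta_reduce at hD
  rw [Finset.sum_mul] at hD
  rw [Finset.sum_congr rfl hA, Finset.sum_const, nsmul_eq_mul] at hD
  have hf : (n.factorial : ℚ) ≠ 0 := by exact_mod_cast n.factorial_ne_zero
  have hh : (3:ℚ) ≤ n := by exact_mod_cast hn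
  have h0 : (n:ℚ) ≠ 0 := by linarith
  have h1 : (n:ℚ) - 1 ≠ 0 := by linarith
  generalize ∑ π ∈ conjClass n lam, occ π = S at *
  have hE : ((n:ℚ) - 2) / 6 + X₁ / (n : ℚ) + X₂ / ((n : ℚ) * ((n : ℚ) - 1))
        + X₃ / (n : ℚ) + X₄ / ((n : ℚ) * ((n : ℚ) - 1)) =
      (n * (n - 1) * (n - 2) / 6 + p * (p - 1) * (n - 2) / 2 - q * (n - 2)
        + p * (p - 1) * (p - 2) / 3 - r) / (n * (n - 1)) := by
    subst hX1 hX2 hX3 hX4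
    field_simp
    ring
  rw [hE, mul_div_assoc', eq_div_iff (mul_ne_zero h0 h1)]
  apply mul_left_cancel₀ hf
  linear_combination -hD
end
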